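/- Let n ≥ 1 be an integer, 0 < s < 1, 1 < p < ∞, and let u : ℝⁿ → ℝ be a measurable function that is 2π-periodic in the variable x₁ and has finite periodic Gagliardo seminorm [u]^{per}_{W^{s,p}}. Then [u^{*per}]^{per}_{W^{s,p}} = [u]^{per}_{W^{s,p}} holds if and only if u = |u| almost everywhere or u = −|u| almost everywhere, and there exists a ∈ ℝ such that u(x₁,x') = ± u^{*per}(x₁ + a, x') for almost every (x₁,x') ∈ ℝ × ℝ^{n−1} (with the sign matching that of u). -/

import Mathlib

open MeasureTheory Real
open scoped ENNReal

/-- For a measurable set `A ⊂ ℝ` of finite measure, `A^* := (−|A|/2, |A|/2)`. -/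
noncomputable def symmSet (A : Set ℝ) : Set ℝ :=
  Set.Ioo (-((volume A).toReal / 2)) ((volume A).toReal / 2)

/-- Symmetric decreasing rearrangement of a (nonnegative) function on `(−π,π)`:
`u^*(x) := ∫₀^∞ χ_{{u>t}^*}(x) dt`. -/
noncomputable def symmRearr (u : ℝ → ℝ) : ℝ → ℝ := fun x =>
  ∫ t in Set.Ioi (0 : ℝ),
    (symmSet {y | y ∈ Set.Ioo (-π) π ∧ t < u y}).indicator (fun _ => (1 : ℝ)) x

/-- The `2π`-periodic extension of (the restriction to `[−π,π)` of) a function. -/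
noncomputable def periodize (f : ℝ → ℝ) : ℝ → ℝ := fun x =>
  f (x - 2 * π * (⌊(x + π) / (2 * π)⌋ : ℝ))

/-- The periodic rearrangement `f^{*per}`: the `2π`-periodic extension of `(f·χ_{(−π,π)})^*`. -/
noncomputable def perRearr (f : ℝ → ℝ) : ℝ → ℝ := periodize (symmRearr f)
/-- `([u]^{per}_{W^{s,p}})^p`, the `p`-th power of the periodic Gagliardo seminorm on
`ℝⁿ = ℝ × ℝ^{n−1}` (so `n = m + 1`), for a function which is `2π`-periodic in the first
variable. -/
noncomputable def gagP (m : ℕ) (s p : ℝ) (u : ℝ × EuclideanSpace ℝ (Fin m) → ℝ) : ℝ≥0∞ :=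
  ∫⁻ x in {x : ℝ × EuclideanSpace ℝ (Fin m) | x.1 ∈ Set.Ioo (-π) π},
    ∫⁻ y : ℝ × EuclideanSpace ℝ (Fin m),
      ENNReal.ofReal (|u x - u y| ^ p /
        Real.sqrt ((x.1 - y.1) ^ 2 + ‖x.2 - y.2‖ ^ 2) ^ ((m : ℝ) + 1 + s * p))

/-- The periodic Gagliardo seminorm `[u]^{per}_{W^{s,p}}`. -/
noncomputable def gagSeminorm (m : ℕ) (s p : ℝ) (u : ℝ × EuclideanSpace ℝ (Fin m) → ℝ) :
    ℝ≥0∞ :=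
  gagP m s p u ^ (1 / p)
/-- The periodic rearrangement in the first variable:
`u^{*per}(x₁,x') := (|u(·,x')|)^{*per}(x₁)`. -/
noncomputable def perRearr1 (m : ℕ) (u : ℝ × EuclideanSpace ℝ (Fin m) → ℝ) :
    ℝ × EuclideanSpace ℝ (Fin m) → ℝ := fun x =>
  perRearr (fun t => |u (t, x.2)|) x.1

section

namespace Tri

/-- finite q-Pochhammer -/
noncomputable def F (q : ℝ) (n : ℕ) : ℝ := ∏ j ∈ Finset.range n, (1 - q ^ (2 * (j + 1)))

noncomputable def b (q : ℝ) (n : ℤ) : ℝ := if 0 ≤ n then (F q n.toNat)⁻¹ else 0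

lemma F_pos {q : ℝ} (h0 : 0 < q) (h1 : q < 1) (n : ℕ) : 0 < F q n := by
  apply Finset.prod_pos
  intro j _
  have : q ^ (2 * (j + 1)) < 1 := pow_lt_one₀ h0.le h1 (by omega)
  linarith

lemma b_rec {q : ℝ} (h0 : 0 < q) (h1 : q < 1) (n : ℤ) :
    b q (n - 1) = (1 - q ^ (2 * n)) * b q n := by
  rcases lt_trichotomy n 0 with h | h | h
  · have h2 : ¬ (0 ≤ n) := by omega
    have h3 : ¬ (0 ≤ n - 1) := by omega
    simp only [b, h2, if_false]
    rw [if_neg (by omega)]; simp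
  · subst h; simp [b]
  · obtain ⟨k, rfl⟩ : ∃ k : ℕ, n = k + 1 := ⟨(n-1).toNat, by omega⟩
    have hF := F_pos h0 h1 k
    have hF' := F_pos h0 h1 (k+1)
    have e : F q (k+1) = F q k * (1 - q ^ (2 * (k + 1))) := by
      simp [F, Finset.prod_range_succ]
    have e2 : (q : ℝ) ^ (2 * ((k:ℤ) + 1)) = q ^ (2 * (k+1)) := by
      rw [← zpow_natCast]; norm_cast
    have e3 : ((k:ℤ) + 1).toNat = k + 1 := by omega
    have e4 : ((k:ℤ) + 1 - 1).toNat = k := by omega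
    unfold b
    rw [if_pos (by omega), if_pos (by omega), e2, e3, e4, e]
    rw [e] at hF'
    have : (1 - q ^ (2 * (k + 1))) ≠ 0 := fun h => by rw [h] at hF'; simp at hF'
    field_simp

noncomputable def c (q : ℝ) (N : ℕ) (k : ℤ) : ℝ :=
  F q (2 * N) * q ^ (k ^ 2) * b q (N - k) * b q (N + k)

lemma c_rec {q : ℝ} (h0 : 0 < q) (h1 : q < 1) (N : ℕ) (k : ℤ) :
    c q (N + 1) k = (1 + q ^ (2 * (2 * N + 1))) * c q N k
      + q ^ (2 * N + 1) * (c q N (k - 1) + c q N (k + 1)) := by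
  have e1 := b_rec h0 h1 ((N:ℤ) + 1 - k)
  have e2 := b_rec h0 h1 ((N:ℤ) + 1 + k)
  have e3 := b_rec h0 h1 ((N:ℤ) - k)
  have e4 := b_rec h0 h1 ((N:ℤ) + k)
  rw [show (N:ℤ) + 1 - k - 1 = N - k by ring] at e1
  rw [show (N:ℤ) + 1 + k - 1 = N + k by ring] at e2
  have eF : F q (2 * (N + 1)) = F q (2 * N) * (1 - q ^ (2 * (2 * N + 1))) *
      (1 - q ^ (2 * (2 * N + 2))) := by
    rw [show 2 * (N + 1) = 2 * N + 1 + 1 by ring]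
    simp [F, Finset.prod_range_succ]
  unfold c
  push_cast
  rw [eF, show (N:ℤ) - (k - 1) = N + 1 - k by ring, show (N:ℤ) + (k - 1) = N + k - 1 by ring,
    show (N:ℤ) - (k + 1) = N - k - 1 by ring, show (N:ℤ) + (k + 1) = N + 1 + k by ring]
  rw [e3, e4, e1, e2]
  have hq : q ≠ 0 := h0.ne'
  have z1 : q ^ (2 * ((N:ℤ) + 1 - k)) = q ^ 2 * q ^ (2 * N) * (q ^ k)⁻¹ ^ 2 := by
    rw [← zpow_natCast, ← zpow_natCast, inv_pow, ← zpow_natCast, ← zpow_mul, ← zpow_neg,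
      ← zpow_add₀ hq, ← zpow_add₀ hq]; congr 1; push_cast; ring
  have z2 : q ^ (2 * ((N:ℤ) + 1 + k)) = q ^ 2 * q ^ (2 * N) * (q ^ k) ^ 2 := by
    rw [← zpow_natCast, ← zpow_natCast, ← zpow_natCast, ← zpow_mul,
      ← zpow_add₀ hq, ← zpow_add₀ hq]; congr 1; push_cast; ring
  have z3 : q ^ (2 * ((N:ℤ) - k)) = q ^ (2 * N) * (q ^ k)⁻¹ ^ 2 := by
    rw [← zpow_natCast, inv_pow, ← zpow_natCast, ← zpow_mul, ← zpow_neg,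
      ← zpow_add₀ hq]; congr 1; push_cast; ring
  have z4 : q ^ (2 * ((N:ℤ) + k)) = q ^ (2 * N) * (q ^ k) ^ 2 := by
    rw [← zpow_natCast, ← zpow_natCast, ← zpow_mul,
      ← zpow_add₀ hq]; congr 1; push_cast; ring
  have z5 : q ^ ((k - 1) ^ 2) = q ^ (k ^ 2) * (q ^ k)⁻¹ ^ 2 * q := by
    rw [inv_pow, ← zpow_natCast, ← zpow_mul, ← zpow_neg,
      ← zpow_add₀ hq, ← zpow_add_one₀ hq]; congr 1; push_cast; ring
  have z6 : q ^ ((k + 1) ^ 2) = q ^ (k ^ 2) * (q ^ k) ^ 2 * q := by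
    rw [← zpow_natCast, ← zpow_mul,
      ← zpow_add₀ hq, ← zpow_add_one₀ hq]; congr 1; push_cast; ring
  rw [z1, z2, z3, z4, z5, z6]
  have hz : q ^ k ≠ 0 := zpow_ne_zero _ hq
  generalize q ^ k = y at *
  field_simp
  ring

lemma b_neg {q : ℝ} {n : ℤ} (h : n < 0) : b q n = 0 := by
  simp [b, not_le.2 h]

lemma b_nonneg {q : ℝ} (h0 : 0 < q) (h1 : q < 1) (n : ℤ) : 0 ≤ b q n := by
  unfold b; split_ifs
  · exact (inv_pos.2 (F_pos h0 h1 _)).le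
  · exact le_rfl

lemma b_pos {q : ℝ} (h0 : 0 < q) (h1 : q < 1) {n : ℤ} (hn : 0 ≤ n) : 0 < b q n := by
  unfold b; rw [if_pos hn]
  exact (inv_pos.2 (F_pos h0 h1 _))

lemma hasSum_c {q : ℝ} (h0 : 0 < q) (h1 : q < 1) {z : ℂ} (hz : z ≠ 0) (N : ℕ) :
    HasSum (fun k : ℤ => (c q N k : ℂ) * z ^ k)
      (∏ j ∈ Finset.range N, (1 + z * (q:ℂ) ^ (2 * j + 1)) * (1 + z⁻¹ * (q:ℂ) ^ (2 * j + 1))) := by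
  induction N with
  | zero =>
    have : (fun k : ℤ => (c q 0 k : ℂ) * z ^ k) = fun k => if k = 0 then (1:ℂ) else 0 := by
      funext k
      rcases lt_trichotomy k 0 with h | h | h
      · have : b q k = 0 := b_neg h
        simp [c, this, h.ne]
      · subst h; simp [c, b, F]
      · have : b q (-k) = 0 := b_neg (by omega)
        simp [c, this, h.ne']
    rw [this]
    simpa using hasSum_ite_eq (0:ℤ) (1:ℂ)
  | succ N ih =>
    rw [Finset.prod_range_succ]
    set P := ∏ j ∈ Finset.range N, (1 + z * (q:ℂ) ^ (2 * j + 1)) * (1 + z⁻¹ * (q:ℂ) ^ (2 * j + 1))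
    have s1 : HasSum (fun k : ℤ => (c q N (k - 1) : ℂ) * z ^ k) (z * P) := by
      have := (Equiv.subRight (1:ℤ)).hasSum_iff.2 (ih.mul_left z)
      have e : ((fun i : ℤ => z * ((c q N i : ℂ) * z ^ i)) ∘ (Equiv.subRight (1:ℤ))) =
          (fun k : ℤ => (c q N (k - 1) : ℂ) * z ^ k) := by
        funext k
        simp only [Function.comp, Equiv.subRight_apply]
        rw [zpow_sub_one₀ hz]; field_simp
      rw [e] at this; exact this
    have s2 : HasSum (fun k : ℤ => (c q N (k + 1) : ℂ) * z ^ k) (z⁻¹ * P) := by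
      have := (Equiv.addRight (1:ℤ)).hasSum_iff.2 (ih.mul_left z⁻¹)
      have e : ((fun i : ℤ => z⁻¹ * ((c q N i : ℂ) * z ^ i)) ∘ (Equiv.addRight (1:ℤ))) =
          (fun k : ℤ => (c q N (k + 1) : ℂ) * z ^ k) := by
        funext k
        simp only [Function.comp, Equiv.coe_addRight]
        rw [zpow_add_one₀ hz]; field_simp
      rw [e] at this; exact this
    have := (ih.mul_left (1 + (q:ℂ) ^ (2 * (2 * N + 1)))).add
      ((s1.add s2).mul_left ((q:ℂ) ^ (2 * N + 1)))
    have e1 : (fun k : ℤ => (c q (N + 1) k : ℂ) * z ^ k) = fun b =>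
      (1 + (q:ℂ) ^ (2 * (2 * N + 1))) * (↑(c q N b) * z ^ b) +
        (q:ℂ) ^ (2 * N + 1) * (↑(c q N (b - 1)) * z ^ b + ↑(c q N (b + 1)) * z ^ b) := by
      funext k
      rw [c_rec h0 h1]; push_cast; ring
    have e2 : P * ((1 + z * ↑q ^ (2 * N + 1)) * (1 + z⁻¹ * ↑q ^ (2 * N + 1))) =
      (1 + (q:ℂ) ^ (2 * (2 * N + 1))) * P + (q:ℂ) ^ (2 * N + 1) * (z * P + z⁻¹ * P) := by
      have : z * z⁻¹ = 1 := mul_inv_cancel₀ hz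
      linear_combination P * (q:ℂ) ^ (2 * (2 * N + 1)) * this
    rw [e1, e2]; exact this

lemma b_mul_le {q : ℝ} (h0 : 0 < q) (h1 : q < 1) (N k : ℕ) :
    b q (N - k) * b q (N + k) ≤ b q N * b q N := by
  induction k with
  | zero => simp
  | succ k ih =>
    refine le_trans ?_ ih
    have e1 := b_rec h0 h1 ((N:ℤ) - k)
    have e2 := b_rec h0 h1 ((N:ℤ) + k + 1)
    rw [show (N:ℤ) + k + 1 - 1 = N + k by ring] at e2
    push_cast
    rw [show (N:ℤ) - (k + 1) = N - k - 1 by ring, ← add_assoc, e1, e2]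
    have hxy : q ^ (2 * ((N:ℤ) + k + 1)) ≤ q ^ (2 * ((N:ℤ) - k)) :=
      zpow_le_zpow_right_of_le_one₀ h0 h1.le (by omega)
    have := mul_nonneg (b_nonneg h0 h1 ((N:ℤ) - k)) (b_nonneg h0 h1 ((N:ℤ) + k + 1))
    nlinarith

lemma b_mul_le' {q : ℝ} (h0 : 0 < q) (h1 : q < 1) (N : ℕ) (k : ℤ) :
    b q (N - k) * b q (N + k) ≤ b q N * b q N := by
  obtain ⟨n, rfl | rfl⟩ := k.eq_nat_or_neg
  · exact b_mul_le h0 h1 N n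
  · have := b_mul_le h0 h1 N n
    rw [sub_neg_eq_add, ← sub_eq_add_neg, mul_comm]; exact this

open Filter Topology in
lemma tendsto_pow_shift {q : ℝ} (h0 : 0 < q) (h1 : q < 1) (k : ℤ) :
    Tendsto (fun N : ℕ => 1 - q ^ (2 * ((N:ℤ) + k))) atTop (𝓝 1) := by
  have : Tendsto (fun N : ℕ => 1 - q ^ (2 * k) * (q ^ 2) ^ N) atTop (𝓝 (1 - q ^ (2 * k) * 0)) :=
    ((tendsto_pow_atTop_nhds_zero_of_lt_one (by positivity) (by nlinarith)).const_mul _).const_sub _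
  simp only [mul_zero, sub_zero] at this
  refine this.congr fun N => ?_
  rw [mul_add, zpow_add₀ h0.ne', ← pow_mul, mul_comm (q ^ (2 * k)), ← zpow_natCast]
  push_cast; rfl

open Filter Topology in
lemma tendsto_b {q : ℝ} (h0 : 0 < q) (h1 : q < 1) (k : ℤ) :
    Tendsto (fun N : ℕ => b q (N + k) / b q N) atTop (𝓝 1) := by
  induction k using Int.induction_on with
  | zero =>
    refine tendsto_const_nhds.congr fun N => ?_
    rw [add_zero, div_self (b_pos h0 h1 (by positivity)).ne']
  | succ k ih =>
    have h := ih.div (tendsto_pow_shift h0 h1 (k+1)) one_ne_zero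
    rw [div_one] at h
    refine h.congr fun N => ?_
    have e2 := b_rec h0 h1 ((N:ℤ) + (k + 1))
    rw [show (N:ℤ) + (k + 1) - 1 = N + k by ring] at e2
    simp only [Pi.div_apply]
    rw [e2]
    have : q ^ (2 * ((N:ℤ) + (k + 1))) < 1 := zpow_lt_one₀ h0 h1 (by omega)
    have h3 : 1 - q ^ (2 * ((N:ℤ) + (k + 1))) ≠ 0 := by linarith
    field_simp
  | pred k ih =>
    have h := ih.mul (tendsto_pow_shift h0 h1 (-k))
    rw [mul_one] at h
    refine h.congr fun N => ?_
    have e2 := b_rec h0 h1 ((N:ℤ) + (-k))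
    rw [show (N:ℤ) + (-k - 1) = N + (-k) - 1 by ring, e2]
    ring

open Filter Topology in
/-- Jacobi triple product in the limit form we need. -/
lemma tendsto_prod {q : ℝ} (h0 : 0 < q) (h1 : q < 1) {z : ℂ} (hz : ‖z‖ = 1)
    (hs : Summable (fun k : ℤ => q ^ (k ^ 2))) {S : ℂ}
    (hS : HasSum (fun k : ℤ => ((q ^ (k ^ 2) : ℝ) : ℂ) * z ^ k) S) :
    Tendsto (fun N : ℕ => ((c q N 0 : ℝ) : ℂ)⁻¹ * ∏ j ∈ Finset.range N,
      (1 + z * (q:ℂ) ^ (2 * j + 1)) * (1 + z⁻¹ * (q:ℂ) ^ (2 * j + 1))) atTop (𝓝 S) := by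
  have hz0 : z ≠ 0 := by rintro rfl; simp at hz
  have hc0 : ∀ N, 0 < c q N 0 := fun N => by
    have := b_pos h0 h1 (n := (N:ℤ)) (by positivity)
    have := F_pos h0 h1 (2 * N)
    simp only [c, sub_zero, add_zero]; positivity
  have key := tendsto_tsum_of_dominated_convergence (β := ℤ) (𝓕 := atTop (α := ℕ))
    (f := fun N k => ((c q N 0 : ℝ) : ℂ)⁻¹ * ((c q N k : ℂ) * z ^ k))
    (g := fun k => ((q ^ (k ^ 2) : ℝ) : ℂ) * z ^ k) (bound := fun k => q ^ (k ^ 2)) hs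
    (fun k => by
      refine Tendsto.mul_const _ ?_ |>.congr' (f₁ := fun N : ℕ => (((c q N 0)⁻¹ * c q N k : ℝ) : ℂ) * z ^ k) ?_
      · rw [← Complex.ofReal_inj.2 (mul_one (q ^ (k^2))), ← Complex.ofReal_inj.2 (mul_one (q ^ (k^2) * 1))]
        refine (Complex.continuous_ofReal.tendsto _).comp ?_
        refine (((tendsto_b h0 h1 (-k)).const_mul (q ^ (k^2))).mul (tendsto_b h0 h1 k)).congr ?_
        intro N
        have := b_pos h0 h1 (n := (N:ℤ)) (by positivity)
        have := F_pos h0 h1 (2 * N)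
        simp only [c, sub_zero, add_zero]
        rw [← sub_eq_add_neg]
        field_simp; simp
      · exact Eventually.of_forall fun N => by push_cast; ring)
    (Eventually.of_forall fun N k => by
      rw [norm_mul, norm_mul, norm_inv, norm_zpow, hz, one_zpow, mul_one, Complex.norm_real,
        Complex.norm_real, norm_of_nonneg (hc0 N).le, inv_mul_le_iff₀ (hc0 N)]
      have hF := F_pos h0 h1 (2 * N)
      have hq : 0 < q ^ (k^2) := zpow_pos h0 _
      have b1 := b_nonneg h0 h1 ((N:ℤ) - k)
      have b2 := b_nonneg h0 h1 ((N:ℤ) + k)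
      have hb := b_mul_le' h0 h1 N k
      rw [norm_of_nonneg (by unfold c; positivity)]
      simp only [c, sub_zero, add_zero]
      have := mul_le_mul_of_nonneg_left hb (mul_pos hF hq).le
      norm_num
      nlinarith)
  rw [hS.tsum_eq] at key
  refine key.congr fun N => ?_
  exact ((hasSum_c h0 h1 hz0 N).mul_left _).tsum_eq

open Filter Topology in
lemma theta_anti {q : ℝ} (h0 : 0 < q) (h1 : q < 1)
    (hs : Summable (fun k : ℤ => q ^ (k ^ 2))) {x y S T : ℝ}
    (hS : HasSum (fun k : ℤ => ((q ^ (k ^ 2) : ℝ) : ℂ) * Complex.exp (x * Complex.I) ^ k) S)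
    (hT : HasSum (fun k : ℤ => ((q ^ (k ^ 2) : ℝ) : ℂ) * Complex.exp (y * Complex.I) ^ k) T)
    (hT0 : 0 < T) (hxy : cos y < cos x) : T < S := by
  have hprod : ∀ x : ℝ, ∀ N : ℕ, ∏ j ∈ Finset.range N, (1 + Complex.exp (x * Complex.I) * (q:ℂ) ^ (2 * j + 1)) *
      (1 + (Complex.exp (x * Complex.I))⁻¹ * (q:ℂ) ^ (2 * j + 1)) =
      ((∏ j ∈ Finset.range N, (1 + 2 * cos x * q ^ (2 * j + 1) + (q ^ (2 * j + 1)) ^ 2) : ℝ) : ℂ) := by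
    intro x N
    push_cast
    refine Finset.prod_congr rfl fun j _ => ?_
    have e1 : Complex.exp (x * Complex.I) * (Complex.exp (x * Complex.I))⁻¹ = 1 :=
      mul_inv_cancel₀ (Complex.exp_ne_zero _)
    have e2 : 2 * Complex.cos x = Complex.exp (x * Complex.I) + (Complex.exp (x * Complex.I))⁻¹ := by
      rw [Complex.two_cos, ← Complex.exp_neg]; ring_nf
    rw [e2]
    linear_combination ((q:ℂ) ^ (2 * j + 1)) ^ 2 * e1
  have lim : ∀ x S : ℝ, HasSum (fun k : ℤ => ((q ^ (k ^ 2) : ℝ) : ℂ) * Complex.exp (x * Complex.I) ^ k) S →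
      Tendsto (fun N : ℕ => (c q N 0)⁻¹ *
        ∏ j ∈ Finset.range N, (1 + 2 * cos x * q ^ (2 * j + 1) + (q ^ (2 * j + 1)) ^ 2)) atTop (𝓝 S) := by
    intro x S h
    have := tendsto_prod h0 h1 (Complex.norm_exp_ofReal_mul_I x) hs h
    simp only [hprod] at this
    have := (Complex.continuous_re.tendsto _).comp this
    refine this.congr fun N => ?_
    simp only [Function.comp]
    rw [← Complex.ofReal_inv, ← Complex.ofReal_mul, Complex.ofReal_re]
  have hc0 : ∀ N, 0 < c q N 0 := fun N => by
    have := b_pos h0 h1 (n := (N:ℤ)) (by positivity)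
    have := F_pos h0 h1 (2 * N)
    simp only [c, sub_zero, add_zero]; positivity
  have hpos : ∀ (x : ℝ) (r : ℝ), 0 < r → r < 1 → 0 < 1 + 2 * cos x * r + r ^ 2 := by
    intro x r h0 h1
    nlinarith [neg_one_le_cos x, sq_nonneg (1 - r)]
  have hg := hpos x q h0 h1
  have hg' := hpos y q h0 h1
  -- remove the first factor
  have l1 := (lim x S hS).div_const (1 + 2 * cos x * q + q ^ 2)
  have l2 := (lim y T hT).div_const (1 + 2 * cos y * q + q ^ 2)
  have hle : T / (1 + 2 * cos y * q + q ^ 2) ≤ S / (1 + 2 * cos x * q + q ^ 2) := by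
    refine le_of_tendsto_of_tendsto l2 l1 ?_
    filter_upwards [eventually_ge_atTop 1] with N hN
    obtain ⟨M, rfl⟩ : ∃ M, N = M + 1 := ⟨N - 1, by omega⟩
    rw [Finset.prod_range_succ', Finset.prod_range_succ']
    simp only [mul_zero, zero_add, pow_one]
    rw [← mul_assoc, ← mul_assoc, mul_div_assoc, mul_div_assoc, div_self hg.ne', div_self hg'.ne',
      mul_one, mul_one]
    refine mul_le_mul_of_nonneg_left ?_ (inv_pos.2 (hc0 _)).le
    refine Finset.prod_le_prod (fun j _ => ?_) (fun j _ => ?_)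
    · exact (hpos y _ (by positivity) (pow_lt_one₀ h0.le h1 (by omega))).le
    · have : 0 < q ^ (2 * (j + 1) + 1) := by positivity
      nlinarith
  rw [div_le_div_iff₀ hg' hg] at hle
  have : (1 + 2 * cos y * q + q ^ 2) < (1 + 2 * cos x * q + q ^ 2) := by nlinarith
  nlinarith

open HurwitzZeta in
lemma evenKernel_lt {t : ℝ} (ht : 0 < t) {x y : ℝ} (h : cos (2 * π * y) < cos (2 * π * x)) :
    evenKernel y t < evenKernel x t := by
  have ht' : 0 < 1 / t := by positivity
  rw [evenKernel_functional_equation, evenKernel_functional_equation]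
  refine mul_lt_mul_of_pos_left ?_ (by positivity)
  set q := rexp (-π * (1 / t)) with hq
  have h0 : 0 < q := exp_pos _
  have h1 : q < 1 := by
    rw [hq, exp_lt_one_iff]; have := pi_pos; nlinarith [mul_pos this ht']
  have hqk : ∀ k : ℤ, rexp (-π * k ^ 2 * (1 / t)) = q ^ (k ^ 2) := by
    intro k
    rw [hq, ← Real.rpow_intCast, ← Real.exp_mul]; push_cast; ring_nf
  have conv : ∀ x : ℝ, HasSum (fun k : ℤ => ((q ^ (k ^ 2) : ℝ) : ℂ) *
      Complex.exp ((2 * π * x : ℝ) * Complex.I) ^ k) (cosKernel x (1 / t)) := by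
    intro x
    have := hasSum_int_cosKernel x ht'
    convert this using 2 with k
    rw [hqk, ← Complex.exp_int_mul, mul_comm]
    congr 2
    push_cast; ring
  have pos : 0 < cosKernel y (1/t) := by
    have e := evenKernel_functional_equation y t
    have h2 : 0 < evenKernel y t := by
      refine (hasSum_int_evenKernel y ht).tsum_eq ▸ ?_
      exact (hasSum_int_evenKernel y ht).summable.tsum_pos (fun _ => (exp_pos _).le) 0 (exp_pos _)
    rw [e] at h2
    exact (pos_iff_pos_of_mul_pos h2).1 (by positivity)
  have hs : Summable (fun k : ℤ => q ^ (k ^ 2)) := by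
    have := (hasSum_int_evenKernel 0 ht').summable
    refine this.congr fun k => ?_
    rw [add_zero, hqk]
  exact theta_anti h0 h1 hs (conv x) (conv y) pos h

end Tri

end

section

namespace Per

noncomputable instance factTwoPi : Fact (0 < 2 * π) := ⟨Real.two_pi_pos⟩

abbrev Tc := AddCircle (2 * π)

/-- representative in `(-π, π]` -/
noncomputable def rep (θ : Tc) : ℝ := (AddCircle.measurableEquivIoc (2 * π) (-π) θ : ℝ)

lemma measurable_rep : Measurable rep :=
  measurable_subtype_coe.comp (AddCircle.measurableEquivIoc (2 * π) (-π)).measurable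

@[simp] lemma coe_rep (θ : Tc) : ((rep θ : ℝ) : Tc) = θ :=
  (AddCircle.equivIoc (2 * π) (-π)).symm_apply_apply θ

lemma rep_mem (θ : Tc) : rep θ ∈ Set.Ioc (-π) π := by
  have := (AddCircle.measurableEquivIoc (2 * π) (-π) θ).2
  exact ⟨this.1, this.2.trans (by linarith)⟩

lemma rep_coe {β : Type*} {f : ℝ → β} (hf : Function.Periodic f (2 * π)) (x : ℝ) :
    f (rep (x : Tc)) = f x := by
  have h : ((rep (x : Tc) : ℝ) : Tc) = (x : Tc) := coe_rep _
  rw [← hf.lift_coe, h, hf.lift_coe]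

noncomputable def KR (q r x : ℝ) : ℝ≥0∞ :=
  ∑' k : ℤ, (ENNReal.ofReal ((x + 2 * π * k) ^ 2 + r ^ 2)) ^ (-(q / 2))

lemma KR_periodic (q r : ℝ) : Function.Periodic (KR q r) (2 * π) := by
  intro x
  unfold KR
  rw [← (Equiv.addRight (1:ℤ)).tsum_eq (fun k : ℤ =>
    (ENNReal.ofReal ((x + 2 * π * k) ^ 2 + r ^ 2)) ^ (-(q / 2)))]
  refine tsum_congr fun k => ?_
  simp only [Equiv.coe_addRight]; push_cast; ring_nf

lemma KR_neg (q r x : ℝ) : KR q r (-x) = KR q r x := by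
  unfold KR
  rw [← (Equiv.neg ℤ).tsum_eq (fun k : ℤ =>
    (ENNReal.ofReal ((x + 2 * π * k) ^ 2 + r ^ 2)) ^ (-(q / 2)))]
  refine tsum_congr fun k => ?_
  simp only [Equiv.neg_apply]; push_cast; ring_nf

lemma KR_eq_of_cos {q r x y : ℝ} (h : cos x = cos y) : KR q r x = KR q r y := by
  obtain ⟨k, hk⟩ := (Real.cos_eq_cos_iff).1 h
  have hp := (KR_periodic q r).int_mul k
  rcases hk with hk | hk
  · rw [hk, show 2 * k * π + x = x + k * (2 * π) by ring, hp]
  · rw [hk, show 2 * k * π - x = - x + k * (2 * π) by ring, hp, KR_neg]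

lemma gauss {α w : ℝ} (hα : 0 < α) (hw : 0 < w) :
    ENNReal.ofReal w ^ (-α) * ENNReal.ofReal (Gamma α) =
      ∫⁻ l in Set.Ioi (0:ℝ), ENNReal.ofReal (l ^ (α - 1) * rexp (-(w * l))) := by
  rw [← ofReal_integral_eq_lintegral_ofReal]
  · rw [integral_rpow_mul_exp_neg_mul_Ioi hα hw, ENNReal.ofReal_rpow_of_pos hw,
      ← ENNReal.ofReal_mul (by positivity), one_div, inv_rpow hw.le, rpow_neg hw.le]
  · have h := Real.integral_rpow_mul_exp_neg_mul_Ioi hα hw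
    refine Integrable.of_integral_ne_zero ?_
    rw [h]
    have := Gamma_pos_of_pos hα
    positivity
  · filter_upwards [ae_restrict_mem measurableSet_Ioi] with l hl
    have : (0:ℝ) < l := hl
    positivity

open HurwitzZeta in
lemma KR_gauss {q r x : ℝ} (hq : 1 < q) (h : ∀ k : ℤ, 0 < (x + 2 * π * k) ^ 2 + r ^ 2) :
    KR q r x * ENNReal.ofReal (Gamma (q / 2)) =
      ∫⁻ l in Set.Ioi (0:ℝ), ENNReal.ofReal (l ^ (q / 2 - 1) * rexp (-(r ^ 2 * l)) *
        evenKernel ((x / (2 * π) : ℝ)) (4 * π * l)) := by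
  unfold KR
  rw [← ENNReal.tsum_mul_right]
  simp_rw [fun k => gauss (α := q / 2) (by linarith) (h k)]
  rw [← lintegral_tsum]
  · refine setLIntegral_congr_fun measurableSet_Ioi fun l hl => ?_
    have hl : (0:ℝ) < l := hl
    have hpi := pi_pos
    have hs := hasSum_int_evenKernel (x / (2 * π)) (t := 4 * π * l) (by positivity)
    have hs' := hs.mul_left (l ^ (q / 2 - 1) * rexp (-(r ^ 2 * l)))
    rw [← hs'.tsum_eq]
    rw [ENNReal.ofReal_tsum_of_nonneg (fun n => by positivity) hs'.summable]
    refine tsum_congr fun k => ?_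
    congr 1
    rw [mul_assoc (l ^ (q / 2 - 1)), ← Real.exp_add]
    congr 2
    field_simp
    ring
  · intro k
    exact (by fun_prop : Measurable fun l : ℝ => ENNReal.ofReal (l ^ (q / 2 - 1) *
      rexp (-(((x + 2 * π * k) ^ 2 + r ^ 2) * l)))).aemeasurable

lemma KR_ne_top {q r x : ℝ} (hq : 1 < q) (h : ∀ k : ℤ, x + 2 * π * k ≠ 0) :
    KR q r x ≠ ⊤ := by
  have hpi := pi_pos
  have hs : Summable (fun k : ℤ => (2 * π) ^ (-q) * (1 / |(k:ℝ) + x / (2 * π)| ^ q)) :=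
    ((Real.summable_one_div_int_add_rpow (x / (2 * π)) q).2 hq).mul_left _
  refine ne_top_of_le_ne_top hs.tsum_ofReal_ne_top (ENNReal.tsum_le_tsum fun k => ?_)
  have hk := h k
  have h1 : 0 < (x + 2 * π * k) ^ 2 := by positivity
  have h2 : 0 < (x + 2 * π * k) ^ 2 + r ^ 2 := by positivity
  rw [ENNReal.ofReal_rpow_of_pos h2]
  refine ENNReal.ofReal_le_ofReal ?_
  have e : (2 * π) ^ (-q) * (1 / |(k:ℝ) + x / (2 * π)| ^ q) = ((x + 2 * π * k) ^ 2) ^ (-(q/2)) := by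
    rw [← sq_abs, ← rpow_natCast, ← rpow_mul (abs_nonneg _),
      show x + 2 * π * k = (2 * π) * (k + x / (2 * π)) by field_simp; ring, abs_mul,
      mul_rpow (abs_nonneg _) (abs_nonneg _), abs_of_pos (by positivity : 0 < 2 * π)]
    rw [one_div, ← rpow_neg (abs_nonneg _)]
    congr 2 <;> push_cast <;> ring
  rw [e]
  refine rpow_le_rpow_of_nonpos h1 (by nlinarith) (by linarith)

lemma KR_lt {q r x y : ℝ} (hq : 1 < q) (h : cos y < cos x) : KR q r y < KR q r x := by
  have hy : ∀ k : ℤ, y + 2 * π * k ≠ 0 := by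
    intro k hk
    have : y = 0 - k * (2 * π) := by linarith
    rw [this, Real.cos_periodic.sub_int_mul_eq, cos_zero] at h
    linarith [cos_le_one x]
  have hfin := KR_ne_top (r := r) hq hy
  have hG : 0 < Gamma (q / 2) := Gamma_pos_of_pos (by linarith)
  by_cases hx : ∀ k : ℤ, 0 < (x + 2 * π * k) ^ 2 + r ^ 2
  · have hy' : ∀ k : ℤ, 0 < (y + 2 * π * k) ^ 2 + r ^ 2 := fun k => by
      have := hy k
      positivity
    have e1 := KR_gauss hq hx
    have e2 := KR_gauss hq hy'
    have hG' : ENNReal.ofReal (Gamma (q / 2)) ≠ 0 := by simpa using hG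
    refine (ENNReal.mul_lt_mul_iff_left hG' ENNReal.ofReal_ne_top).1 ?_
    rw [e1, e2]
    have hpos : ∀ l ∈ Set.Ioi (0:ℝ), 0 < l ^ (q / 2 - 1) * rexp (-(r ^ 2 * l)) := fun l hl => by
      have hl : (0:ℝ) < l := hl
      positivity
    have hpi := pi_pos
    refine lintegral_strict_mono ?_ ?_ ?_ ?_
    · simp [Measure.restrict_eq_zero]
    · refine ENNReal.measurable_ofReal.comp_aemeasurable ?_
      refine AEMeasurable.mul (by fun_prop) ?_
      refine ContinuousOn.aemeasurable ?_ measurableSet_Ioi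
      refine (HurwitzZeta.continuousOn_evenKernel _).comp (by fun_prop) ?_
      intro l hl
      have hl : (0:ℝ) < l := hl
      show (0:ℝ) < 4 * π * l
      positivity
    · rw [← e2]; exact ENNReal.mul_ne_top hfin ENNReal.ofReal_ne_top
    · filter_upwards [ae_restrict_mem measurableSet_Ioi] with l hl
      have hl' : (0:ℝ) < l := hl
      have hk : HurwitzZeta.evenKernel ((y / (2 * π) : ℝ)) (4 * π * l) <
          HurwitzZeta.evenKernel ((x / (2 * π) : ℝ)) (4 * π * l) := by
        refine Tri.evenKernel_lt (by positivity) ?_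
        rwa [mul_div_cancel₀ _ (by positivity), mul_div_cancel₀ _ (by positivity)]
      have h0 : 0 ≤ HurwitzZeta.evenKernel ((y / (2 * π) : ℝ)) (4 * π * l) := by
        exact (HurwitzZeta.hasSum_int_evenKernel _ (by positivity)).nonneg fun _ => (exp_pos _).le
      refine ENNReal.ofReal_lt_ofReal_iff_of_nonneg ?_ |>.2 ?_
      · exact mul_nonneg (hpos l hl).le h0
      · exact mul_lt_mul_of_pos_left hk (hpos l hl)
  · push Not at hx
    obtain ⟨k, hk⟩ := hx
    have : KR q r x = ⊤ := by
      refine ENNReal.tsum_eq_top_of_eq_top ⟨k, ?_⟩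
      rw [ENNReal.ofReal_of_nonpos hk, ENNReal.zero_rpow_of_neg (by linarith)]
    rw [this]; exact hfin.lt_top

lemma KR_pos {q r x : ℝ} (hq : 1 < q) : KR q r x ≠ 0 := by
  unfold KR
  intro h
  rw [ENNReal.tsum_eq_zero] at h
  have := h 0
  rw [ENNReal.rpow_eq_zero_iff] at this
  rcases this with h | h
  · linarith [h.2]
  · exact ENNReal.ofReal_ne_top h.1

lemma measurable_KR (q : ℝ) : Measurable (fun z : ℝ × ℝ => KR q z.1 z.2) := by
  unfold KR
  fun_prop

/-- kernel on the circle -/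
noncomputable def K (q r : ℝ) (θ : Tc) : ℝ≥0∞ := KR q r (rep θ)

noncomputable def ccos (θ : Tc) : ℝ := cos (rep θ)

lemma ccos_coe (x : ℝ) : ccos (x : Tc) = cos x := rep_coe Real.cos_periodic x
lemma K_coe (q r x : ℝ) : K q r (x : Tc) = KR q r x := rep_coe (KR_periodic q r) x

lemma K_neg (q r : ℝ) (θ : Tc) : K q r (-θ) = K q r θ := by
  rw [← coe_rep θ, ← AddCircle.coe_neg, K_coe, K_coe, KR_neg]

lemma K_lt {q r : ℝ} {x y : Tc} (hq : 1 < q) (h : ccos y < ccos x) : K q r y < K q r x := by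
  unfold K; exact KR_lt hq h

lemma K_eq {q r : ℝ} {x y : Tc} (h : ccos y = ccos x) : K q r y = K q r x := by
  unfold K; exact KR_eq_of_cos h


lemma measurable_K (q : ℝ) : Measurable (fun z : ℝ × Tc => K q z.1 z.2) := by
  have h1 : Measurable (fun z : ℝ × Tc => (z.1, rep z.2)) :=
    measurable_fst.prodMk (measurable_rep.comp measurable_snd)
  have h2 := (measurable_KR q).comp h1
  have e : (fun z : ℝ × ℝ => KR q z.1 z.2) ∘ (fun z : ℝ × Tc => (z.1, rep z.2)) =
    (fun z : ℝ × Tc => K q z.1 z.2) := by funext z; simp only [Function.comp, K]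
  rw [← e]; exact h2

lemma measurable_ccos : Measurable ccos := measurable_cos.comp measurable_rep

/-- the key identity -/
lemma ccos_key (c x y : Tc) : (ccos x - ccos (c - x)) * (ccos y - ccos (c - y)) =
    (1 - ccos c) * (ccos (x - y) - ccos (x - (c - y))) := by
  rw [← coe_rep c, ← coe_rep x, ← coe_rep y]
  generalize rep c = c; generalize rep x = x; generalize rep y = y
  simp only [← AddCircle.coe_sub, ccos_coe]
  simp only [cos_sub, sin_sub]
  have h1 := sin_sq_add_cos_sq c
  linear_combination sin x * sin y * h1

lemma ccos_eq_one {c : Tc} (h : ccos c = 1) : c = 0 := by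
  rw [ccos, Real.cos_eq_one_iff] at h
  obtain ⟨n, hn⟩ := h
  rw [← coe_rep c, ← hn, AddCircle.coe_eq_zero_iff]
  exact ⟨n, by simp⟩

end Per

end

section

namespace Per

noncomputable def J (p a b : ℝ) : ℝ≥0∞ := ENNReal.ofReal (|a - b| ^ p)

lemma J_ne_top (p a b : ℝ) : J p a b ≠ ⊤ := ENNReal.ofReal_ne_top

lemma strictConvexOn_abs_rpow {p : ℝ} (hp : 1 < p) :
    StrictConvexOn ℝ Set.univ (fun x : ℝ => |x| ^ p) := by
  refine ⟨convex_univ, ?_⟩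
  intro x _ y _ hxy a b ha hb hab
  simp only [smul_eq_mul]
  have hp0 : 0 < p := by linarith
  have hle : |a * x + b * y| ≤ a * |x| + b * |y| := by
    refine (abs_add_le _ _).trans ?_
    rw [abs_mul, abs_mul, abs_of_pos ha, abs_of_pos hb]
  have hc := strictConvexOn_rpow hp
  by_cases h : |x| = |y|
  · -- then x = -y ≠ 0
    have hy : x = -y := by
      rcases abs_eq_abs.1 h with h | h
      · exact absurd h hxy
      · exact h
    have hy0 : y ≠ 0 := by rintro rfl; simp at hy; exact hxy hy
    have hlt : |a * x + b * y| < |y| := by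
      rw [hy, show a * -y + b * y = (b - a) * y by ring, abs_mul]
      have : |b - a| < 1 := by rw [abs_lt]; constructor <;> linarith
      have hy' : 0 < |y| := abs_pos.2 hy0
      nlinarith
    have := rpow_lt_rpow (abs_nonneg _) hlt hp0
    rw [h, ← add_mul, hab, one_mul]; exact this
  · have h2 := hc.2 (abs_nonneg x) (abs_nonneg y) h ha hb hab
    simp only [smul_eq_mul] at h2
    exact (rpow_le_rpow (abs_nonneg _) hle hp0.le).trans_lt h2

lemma four_point {p : ℝ} (hp : 1 < p) {a a' b b' : ℝ} (h1 : a < a') (h2 : b' < b) :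
    |a' - b| ^ p + |a - b'| ^ p < |a - b| ^ p + |a' - b'| ^ p := by
  have hc := (strictConvexOn_abs_rpow hp).2 
  set l : ℝ := (a' - a) / ((a' - a) + (b - b')) with hl
  have hd : 0 < (a' - a) + (b - b') := by linarith
  have hl0 : 0 < l := div_pos (by linarith) hd
  have hl1 : l < 1 := by rw [hl, div_lt_one hd]; linarith
  have hlm : l * ((a' - a) + (b - b')) = a' - a := div_mul_cancel₀ _ hd.ne'
  have e1 := hc (Set.mem_univ (a - b)) (Set.mem_univ (a' - b')) (by intro h; linarith)
    (a := 1 - l) (b := l) (by linarith) hl0 (by ring)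
  have e2 := hc (Set.mem_univ (a - b)) (Set.mem_univ (a' - b')) (by intro h; linarith)
    (a := l) (b := 1 - l) hl0 (by linarith) (by ring)
  simp only [smul_eq_mul] at e1 e2
  rw [show (1 - l) * (a - b) + l * (a' - b') = a' - b by linear_combination hlm] at e1
  rw [show l * (a - b) + (1 - l) * (a' - b') = a - b' by linear_combination -hlm] at e2
  linarith

lemma J_lt {p : ℝ} (hp : 1 < p) {a a' b b' : ℝ} (h1 : a < a') (h2 : b' < b) :
    J p a b' + J p a' b < J p a b + J p a' b' := by
  unfold J
  rw [← ENNReal.ofReal_add (by positivity) (by positivity),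
    ← ENNReal.ofReal_add (by positivity) (by positivity)]
  have := four_point hp h1 h2
  refine (ENNReal.ofReal_lt_ofReal_iff_of_nonneg (by positivity)).2 (by linarith)

noncomputable def Sf (p a a' b b' : ℝ) (K1 K2 : ℝ≥0∞) : ℝ≥0∞ :=
  (J p a b + J p a' b') * K1 + (J p a b' + J p a' b) * K2

lemma Sf_swap1 (p a a' b b' : ℝ) (K1 K2 : ℝ≥0∞) : Sf p a' a b b' K1 K2 = Sf p a a' b b' K2 K1 := by
  unfold Sf; ring
lemma Sf_swap2 (p a a' b b' : ℝ) (K1 K2 : ℝ≥0∞) : Sf p a a' b' b K1 K2 = Sf p a a' b b' K2 K1 := by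
  unfold Sf; ring

lemma ennreal_rearr {j k J' K' : ℝ≥0∞} (h1 : j ≤ J') (h2 : k ≤ K') :
    j * K' + J' * k ≤ J' * K' + j * k := by
  obtain ⟨d, rfl⟩ := exists_add_of_le h1
  obtain ⟨e, rfl⟩ := exists_add_of_le h2
  have : (j + d) * (k + e) + j * k = (j * (k + e) + (j + d) * k) + d * e := by ring
  rw [this]; exact le_self_add

lemma ennreal_rearr_lt {j k J' K' : ℝ≥0∞} (h1 : j < J') (h2 : k < K')
    (hfin : J' * K' + j * k ≠ ⊤) :
    j * K' + J' * k < J' * K' + j * k := by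
  obtain ⟨d, rfl⟩ := exists_add_of_le h1.le
  obtain ⟨e, rfl⟩ := exists_add_of_le h2.le
  have hd : d ≠ 0 := by rintro rfl; simp at h1
  have he : e ≠ 0 := by rintro rfl; simp at h2
  have e0 : (j + d) * (k + e) + j * k = (j * (k + e) + (j + d) * k) + d * e := by ring
  rw [e0] at hfin ⊢
  have hf := ENNReal.add_ne_top.1 hfin
  exact ENNReal.lt_add_right hf.1 (mul_ne_zero hd he)

/-- swapped Sf -/
lemma Sf_le {p : ℝ} (hp : 1 < p) {a a' b b' : ℝ} {K1 K2 : ℝ≥0∞} (hK : K2 ≤ K1) :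
    Sf p (max a a') (min a a') (max b b') (min b b') K1 K2 ≤ Sf p a a' b b' K1 K2 := by
  rcases le_total a a' with h | h <;> rcases le_total b b' with h' | h'
  · rw [max_eq_right h, min_eq_left h, max_eq_right h', min_eq_left h', Sf_swap1, Sf_swap2]
  · rw [max_eq_right h, min_eq_left h, max_eq_left h', min_eq_right h', Sf_swap1]
    rcases h.eq_or_lt with rfl | h
    · unfold Sf; apply le_of_eq; ring
    rcases h'.eq_or_lt with rfl | h'
    · unfold Sf; apply le_of_eq; ring
    have := ennreal_rearr (J_lt hp h h').le hK
    unfold Sf; rw [add_comm]; exact this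
  · rw [max_eq_left h, min_eq_right h, max_eq_right h', min_eq_left h', Sf_swap2]
    rcases h.eq_or_lt with rfl | h
    · unfold Sf; apply le_of_eq; ring
    rcases h'.eq_or_lt with rfl | h'
    · unfold Sf; apply le_of_eq; ring
    have := ennreal_rearr (J_lt hp h h').le hK
    unfold Sf; calc _ = _ := by ring
      _ ≤ _ := this
      _ = _ := by ring
  · rw [max_eq_left h, min_eq_right h, max_eq_left h', min_eq_right h']

lemma Sf_eq {p : ℝ} (hp : 1 < p) {a a' b b' : ℝ} {K1 K2 : ℝ≥0∞} (hK : K2 < K1)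
    (hfin : Sf p a a' b b' K1 K2 ≠ ⊤)
    (heq : Sf p (max a a') (min a a') (max b b') (min b b') K1 K2 = Sf p a a' b b' K1 K2) :
    ¬ (a < a' ∧ b' < b) ∧ ¬ (a' < a ∧ b < b') := by
  constructor
  · rintro ⟨h, h'⟩
    rw [max_eq_right h.le, min_eq_left h.le, max_eq_left h'.le, min_eq_right h'.le, Sf_swap1] at heq
    have := ennreal_rearr_lt (J_lt hp h h') hK hfin
    refine absurd heq (ne_of_lt ?_)
    unfold Sf; rw [add_comm]; exact this
  · rintro ⟨h, h'⟩
    rw [max_eq_left h.le, min_eq_right h.le, max_eq_right h'.le, min_eq_left h'.le, Sf_swap2] at heq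
    have := ennreal_rearr_lt (J_lt hp h h') hK (by
      unfold Sf at hfin
      rw [add_comm (J p a' b'), add_comm (J p a' b)]; exact hfin)
    refine absurd heq (ne_of_lt ?_)
    unfold Sf; calc _ = _ := by ring
      _ < _ := this
      _ = _ := by ring

abbrev Ev (m : ℕ) := EuclideanSpace ℝ (Fin m)
abbrev X (m : ℕ) := Tc × Ev m

variable {m : ℕ}

noncomputable def refl (c : Tc) (x : X m) : X m := (c - x.1, x.2)

lemma refl_refl (c : Tc) (x : X m) : refl c (refl c x) = x := by
  simp [refl]

lemma mp_refl (c : Tc) : MeasurePreserving (refl (m := m) c) volume volume := by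
  have h1 : MeasurePreserving (fun θ : Tc => c - θ) volume volume :=
    Measure.measurePreserving_sub_left volume c
  exact h1.prod (MeasurePreserving.id volume)

noncomputable def rot (c : Tc) (x : X m) : X m := (x.1 + c, x.2)

lemma mp_rot (c : Tc) : MeasurePreserving (rot (m := m) c) volume volume := by
  have h1 : MeasurePreserving (fun θ : Tc => θ + c) volume volume :=
    measurePreserving_add_right volume c
  exact h1.prod (MeasurePreserving.id volume)

noncomputable def pol (c : Tc) (v : X m → ℝ) (x : X m) : ℝ :=
  if ccos (c - x.1) < ccos x.1 then max (v x) (v (refl c x))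
  else if ccos x.1 < ccos (c - x.1) then min (v x) (v (refl c x)) else v x

lemma measurable_pol (c : Tc) {v : X m → ℝ} (hv : Measurable v) : Measurable (pol c v) := by
  have h1 : Measurable (fun x : X m => ccos x.1) := measurable_ccos.comp measurable_fst
  have h2 : Measurable (fun x : X m => ccos (c - x.1)) :=
    measurable_ccos.comp (measurable_fst.const_sub c)
  have h3 : Measurable (fun x => v (refl c x)) := hv.comp (mp_refl c).measurable
  unfold pol
  exact Measurable.ite (measurableSet_lt h2 h1) (hv.max h3)
    (Measurable.ite (measurableSet_lt h1 h2) (hv.min h3) hv)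

/-- energy density -/
noncomputable def ed (q p : ℝ) (v : X m → ℝ) (z : X m × X m) : ℝ≥0∞ :=
  J p (v z.1) (v z.2) * K q ‖z.1.2 - z.2.2‖ (z.1.1 - z.2.1)

noncomputable def En (q p : ℝ) (v : X m → ℝ) : ℝ≥0∞ := ∫⁻ z : X m × X m, ed q p v z

lemma measurable_ker (q : ℝ) : Measurable
    (fun z : X m × X m => K q ‖z.1.2 - z.2.2‖ (z.1.1 - z.2.1)) := by
  have h1 : Measurable (fun z : X m × X m => (‖z.1.2 - z.2.2‖, z.1.1 - z.2.1)) := by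
    refine Measurable.prodMk ?_ ?_
    · exact ((measurable_snd.comp measurable_fst).sub (measurable_snd.comp measurable_snd)).norm
    · exact (measurable_fst.comp measurable_fst).sub (measurable_fst.comp measurable_snd)
  have h2 := (measurable_K q).comp h1
  have e : (fun z : ℝ × Tc => K q z.1 z.2) ∘ (fun z : X m × X m => (‖z.1.2 - z.2.2‖, z.1.1 - z.2.1))
    = (fun z : X m × X m => K q ‖z.1.2 - z.2.2‖ (z.1.1 - z.2.1)) := by
    funext z; simp only [Function.comp]
  rw [← e]; exact h2

lemma measurable_ed (q p : ℝ) {v : X m → ℝ} (hv : Measurable v) : Measurable (ed q p v) := by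
  refine Measurable.mul ?_ (measurable_ker q)
  unfold J
  exact ENNReal.measurable_ofReal.comp
    ((((hv.comp measurable_fst).sub (hv.comp measurable_snd)).norm).pow_const p)

/-- symmetrised density -/
noncomputable def sd (q p : ℝ) (c : Tc) (v : X m → ℝ) (z : X m × X m) : ℝ≥0∞ :=
  Sf p (v z.1) (v (refl c z.1)) (v z.2) (v (refl c z.2)) (K q ‖z.1.2 - z.2.2‖ (z.1.1 - z.2.1))
    (K q ‖z.1.2 - z.2.2‖ (z.1.1 - (c - z.2.1)))

lemma sd_eq (q p : ℝ) (c : Tc) (v : X m → ℝ) (z : X m × X m) :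
    sd q p c v z = ed q p v z + ed q p v (refl c z.1, refl c z.2) + ed q p v (z.1, refl c z.2)
      + ed q p v (refl c z.1, z.2) := by
  have e1 : K q ‖z.1.2 - z.2.2‖ ((c - z.1.1) - (c - z.2.1)) = K q ‖z.1.2 - z.2.2‖ (z.1.1 - z.2.1) := by
    rw [← K_neg]; congr 1; abel
  have e2 : K q ‖z.1.2 - z.2.2‖ ((c - z.1.1) - z.2.1) =
      K q ‖z.1.2 - z.2.2‖ (z.1.1 - (c - z.2.1)) := by
    rw [← K_neg]; congr 1; abel
  unfold sd ed Sf
  simp only [refl] at *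
  rw [e1, e2]; ring

lemma lintegral_sd (q p : ℝ) (c : Tc) {v : X m → ℝ} (hv : Measurable v) :
    ∫⁻ z, sd q p c v z = 4 * En q p v := by
  have m0 := measurable_ed q p hv
  have r1 : MeasurePreserving (fun z : X m × X m => (refl c z.1, refl c z.2)) volume volume :=
    (mp_refl c).prod (mp_refl c)
  have r2 : MeasurePreserving (fun z : X m × X m => (z.1, refl c z.2)) volume volume :=
    (MeasurePreserving.id volume).prod (mp_refl c)
  have r3 : MeasurePreserving (fun z : X m × X m => (refl c z.1, z.2)) volume volume :=
    (mp_refl c).prod (MeasurePreserving.id volume)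
  simp_rw [sd_eq]
  rw [lintegral_add_left, lintegral_add_left, lintegral_add_left,
    r1.lintegral_comp m0, r2.lintegral_comp m0, r3.lintegral_comp m0]
  · unfold En; ring
  · exact m0
  · exact m0.add (m0.comp r1.measurable)
  · exact (m0.add (m0.comp r1.measurable)).add (m0.comp r2.measurable)

lemma pol_far {c : Tc} {v : X m → ℝ} {x : X m} (h : ccos (c - x.1) < ccos x.1) :
    pol c v x = max (v x) (v (refl c x)) ∧ pol c v (refl c x) = min (v x) (v (refl c x)) := by
  constructor
  · simp [pol, h]
  · simp only [pol, refl_refl]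
    simp only [refl, sub_sub_cancel]
    rw [if_neg (not_lt.2 h.le), if_pos h, min_comm]

lemma pol_far' {c : Tc} {v : X m → ℝ} {x : X m} (h : ccos x.1 < ccos (c - x.1)) :
    pol c v x = min (v x) (v (refl c x)) ∧ pol c v (refl c x) = max (v x) (v (refl c x)) := by
  have := pol_far (v := v) (x := refl c x) (c := c) (by simpa [refl] using h)
  rw [refl_refl] at this
  rw [this.1, this.2, min_comm, max_comm]; exact ⟨rfl, rfl⟩

lemma pol_tie {c : Tc} {v : X m → ℝ} {x : X m} (h : ccos x.1 = ccos (c - x.1)) :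
    pol c v x = v x ∧ pol c v (refl c x) = v (refl c x) := by
  constructor
  · simp [pol, h]
  · simp only [pol, refl_refl]
    simp [refl, h]

lemma Sf_pol_tie (p : ℝ) (c : Tc) (v : X m → ℝ) (x y : X m) (k : ℝ≥0∞) :
    Sf p (pol c v x) (pol c v (refl c x)) (pol c v y) (pol c v (refl c y)) k k =
    Sf p (v x) (v (refl c x)) (v y) (v (refl c y)) k k := by
  have hx : (pol c v x = v x ∧ pol c v (refl c x) = v (refl c x)) ∨
      (pol c v x = v (refl c x) ∧ pol c v (refl c x) = v x) := by
    rcases lt_trichotomy (ccos x.1) (ccos (c - x.1)) with h | h | h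
    · rw [(pol_far' h).1, (pol_far' h).2]
      rcases le_total (v x) (v (refl c x)) with h' | h' <;> simp [h']
    · left; exact pol_tie h
    · rw [(pol_far h).1, (pol_far h).2]
      rcases le_total (v x) (v (refl c x)) with h' | h' <;> simp [h']
  have hy : (pol c v y = v y ∧ pol c v (refl c y) = v (refl c y)) ∨
      (pol c v y = v (refl c y) ∧ pol c v (refl c y) = v y) := by
    rcases lt_trichotomy (ccos y.1) (ccos (c - y.1)) with h | h | h
    · rw [(pol_far' h).1, (pol_far' h).2]
      rcases le_total (v y) (v (refl c y)) with h' | h' <;> simp [h']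
    · left; exact pol_tie h
    · rw [(pol_far h).1, (pol_far h).2]
      rcases le_total (v y) (v (refl c y)) with h' | h' <;> simp [h']
  rcases hx with ⟨h1, h2⟩ | ⟨h1, h2⟩ <;> rcases hy with ⟨h3, h4⟩ | ⟨h3, h4⟩ <;>
    rw [h1, h2, h3, h4] <;> unfold Sf <;> ring

lemma ccos_le_one (x : Tc) : ccos x ≤ 1 := cos_le_one _

lemma sd_pol_le {q p : ℝ} (hq : 1 < q) (hp : 1 < p) (c : Tc) (v : X m → ℝ) (z : X m × X m) :
    sd q p c (pol c v) z ≤ sd q p c v z := by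
  obtain ⟨x, y⟩ := z
  have key := ccos_key c x.1 y.1
  unfold sd
  dsimp only
  set r := ‖x.2 - y.2‖
  by_cases hc : c = 0
  · subst hc
    have hcz : ∀ w : X m, ccos w.1 = ccos (0 - w.1) := by
      intro w
      rw [zero_sub, ← coe_rep w.1, ← AddCircle.coe_neg, ccos_coe, ccos_coe, cos_neg]
    rw [(pol_tie (hcz x)).1, (pol_tie (hcz x)).2, (pol_tie (hcz y)).1, (pol_tie (hcz y)).2]
  have hc1 : 0 < 1 - ccos c := by
    have := lt_of_le_of_ne (ccos_le_one c) (fun h => hc (ccos_eq_one h))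
    linarith
  have kpos : 0 < (ccos x.1 - ccos (c - x.1)) * (ccos y.1 - ccos (c - y.1)) →
      K q r (x.1 - (c - y.1)) ≤ K q r (x.1 - y.1) := by
    intro h
    rw [key] at h
    have := (pos_iff_pos_of_mul_pos h).1 hc1
    exact (K_lt hq (by linarith)).le
  have kneg : (ccos x.1 - ccos (c - x.1)) * (ccos y.1 - ccos (c - y.1)) < 0 →
      K q r (x.1 - y.1) ≤ K q r (x.1 - (c - y.1)) := by
    intro h
    rw [key] at h
    have := (neg_iff_pos_of_mul_neg h)
    have h2 : ccos (x.1 - y.1) - ccos (x.1 - (c - y.1)) < 0 := by nlinarith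
    exact (K_lt hq (by linarith)).le
  have kz : (ccos x.1 - ccos (c - x.1)) * (ccos y.1 - ccos (c - y.1)) = 0 →
      K q r (x.1 - (c - y.1)) = K q r (x.1 - y.1) := by
    intro h
    rw [key] at h
    have := (mul_eq_zero.1 h).resolve_left hc1.ne'
    exact K_eq (by linarith)
  rcases lt_trichotomy (ccos x.1) (ccos (c - x.1)) with hx | hx | hx
  · rcases lt_trichotomy (ccos y.1) (ccos (c - y.1)) with hy | hy | hy
    · rw [(pol_far' hx).1, (pol_far' hx).2, (pol_far' hy).1, (pol_far' hy).2, Sf_swap1, Sf_swap2]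
      exact Sf_le hp (kpos (by nlinarith))
    · rw [kz (by rw [hy]; ring), Sf_pol_tie]
    · rw [(pol_far' hx).1, (pol_far' hx).2, (pol_far hy).1, (pol_far hy).2, Sf_swap1]
      have := Sf_le hp (a := v (refl c x)) (a' := v x) (b := v y) (b' := v (refl c y))
        (kneg (by nlinarith))
      rwa [max_comm (v (refl c x)), min_comm (v (refl c x)), Sf_swap1 p (v x)] at this
  · rw [kz (by rw [hx]; ring), Sf_pol_tie]
  · rcases lt_trichotomy (ccos y.1) (ccos (c - y.1)) with hy | hy | hy
    · rw [(pol_far hx).1, (pol_far hx).2, (pol_far' hy).1, (pol_far' hy).2, Sf_swap2]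
      have := Sf_le hp (a := v x) (a' := v (refl c x)) (b := v (refl c y)) (b' := v y)
        (kneg (by nlinarith))
      rwa [max_comm (v (refl c y)), min_comm (v (refl c y)), Sf_swap2 p (v x) _ (v y)] at this
    · rw [kz (by rw [hy]; ring), Sf_pol_tie]
    · rw [(pol_far hx).1, (pol_far hx).2, (pol_far hy).1, (pol_far hy).2]
      exact Sf_le hp (kpos (by nlinarith))

end Per

end

section

namespace Per
variable {m : ℕ}

lemma En_pol_le {q p : ℝ} (hq : 1 < q) (hp : 1 < p) (c : Tc) {v : X m → ℝ} (hv : Measurable v) :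
    En q p (pol c v) ≤ En q p v := by
  have h : ∫⁻ z, sd q p c (pol c v) z ≤ ∫⁻ z, sd q p c v z :=
    lintegral_mono (sd_pol_le hq hp c v)
  rw [lintegral_sd q p c hv, lintegral_sd q p c (measurable_pol c hv)] at h
  exact (ENNReal.mul_le_mul_iff_right (by norm_num) (by norm_num)).1 h

lemma measurable_sd (q p : ℝ) (c : Tc) {v : X m → ℝ} (hv : Measurable v) :
    Measurable (sd q p c v) := by
  have m0 := measurable_ed q p hv
  have r0 := (mp_refl (m := m) c).measurable
  have e : sd q p c v = fun z => ed q p v z + ed q p v (refl c z.1, refl c z.2)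
      + ed q p v (z.1, refl c z.2) + ed q p v (refl c z.1, z.2) := funext (sd_eq q p c v)
  rw [e]
  exact ((m0.add (m0.comp ((r0.comp measurable_fst).prodMk (r0.comp measurable_snd)))).add
    (m0.comp (measurable_fst.prodMk (r0.comp measurable_snd)))).add
    (m0.comp ((r0.comp measurable_fst).prodMk measurable_snd))

lemma null_of_prod_null {P Q : Set (X m)}
    (h : ∀ᵐ z : X m × X m, ¬ (z.1 ∈ P ∧ z.2 ∈ Q)) :
    volume P = 0 ∨ volume Q = 0 := by
  have h1 : (volume : Measure (X m × X m)) (P ×ˢ Q) = 0 := by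
    rw [ae_iff] at h
    convert h using 2
    ext z; simp
  rw [Measure.volume_eq_prod, Measure.prod_prod] at h1
  exact mul_eq_zero.1 h1

lemma En_pol_eq {q p : ℝ} (hq : 1 < q) (hp : 1 < p) (c : Tc) {v : X m → ℝ} (hv : Measurable v)
    (hfin : En q p v ≠ ⊤) (heq : En q p (pol c v) = En q p v) :
    (∀ᵐ x : X m, ccos (c - x.1) < ccos x.1 → v (refl c x) ≤ v x) ∨
    (∀ᵐ x : X m, ccos (c - x.1) < ccos x.1 → v x ≤ v (refl c x)) := by
  have hfin4 : ∫⁻ z, sd q p c v z ≠ ⊤ := by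
    rw [lintegral_sd q p c hv]; exact ENNReal.mul_ne_top (by norm_num) hfin
  have hae : sd q p c (pol c v) =ᵐ[volume] sd q p c v := by
    refine ae_eq_of_ae_le_of_lintegral_le (Filter.Eventually.of_forall (sd_pol_le hq hp c v)) ?_
      (measurable_sd q p c hv).aemeasurable ?_
    · rw [lintegral_sd q p c (measurable_pol c hv), heq, ← lintegral_sd q p c hv]; exact hfin4
    · rw [lintegral_sd q p c (measurable_pol c hv), heq, ← lintegral_sd q p c hv]
  have hlt := ae_lt_top (measurable_sd q p c hv) hfin4
  have hnull := null_of_prod_null (m := m)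
    (P := {x : X m | ccos (c - x.1) < ccos x.1 ∧ v x < v (refl c x)})
    (Q := {x : X m | ccos (c - x.1) < ccos x.1 ∧ v (refl c x) < v x}) (by
      filter_upwards [hae, hlt] with z h1 h2
      rintro ⟨⟨hx, hx'⟩, hy, hy'⟩
      obtain ⟨x, y⟩ := z
      dsimp only at hx hx' hy hy'
      unfold sd at h1 h2
      dsimp only at h1 h2
      rw [(pol_far hx).1, (pol_far hx).2, (pol_far hy).1, (pol_far hy).2] at h1
      have key := ccos_key c x.1 y.1
      have hc : 0 ≤ 1 - ccos c := by have := ccos_le_one c; linarith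
      have hpos : 0 < (1 - ccos c) * (ccos (x.1 - y.1) - ccos (x.1 - (c - y.1))) := by
        rw [← key]; exact mul_pos (by linarith) (by linarith)
      have := pos_of_mul_pos_right hpos hc
      exact (Sf_eq hp (K_lt hq (by linarith)) h2.ne h1).1 ⟨hx', hy'⟩)
  rcases hnull with h | h
  · left
    have h' := measure_eq_zero_iff_ae_notMem.1 h
    filter_upwards [h'] with x hx hx1
    by_contra hh
    exact hx ⟨hx1, not_le.1 hh⟩
  · right
    have h' := measure_eq_zero_iff_ae_notMem.1 h
    filter_upwards [h'] with x hx hx1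
    by_contra hh
    exact hx ⟨hx1, not_le.1 hh⟩

lemma En_congr {q p : ℝ} {v w : X m → ℝ} (h : v =ᵐ[volume] w) : En q p v = En q p w := by
  have h1 : ∀ᵐ z : X m × X m, v z.1 = w z.1 :=
    Measure.quasiMeasurePreserving_fst.ae h
  have h2 : ∀ᵐ z : X m × X m, v z.2 = w z.2 :=
    Measure.quasiMeasurePreserving_snd.ae h
  unfold En
  refine lintegral_congr_ae ?_
  filter_upwards [h1, h2] with z h1 h2
  unfold ed; rw [h1, h2]

lemma En_neg {q p : ℝ} (v : X m → ℝ) : En q p (fun x => - v x) = En q p v := by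
  unfold En ed J
  congr 1; funext z
  congr 3
  rw [← abs_neg]; congr 1; ring

lemma En_rot {q p : ℝ} (a : Tc) {v : X m → ℝ} (hv : Measurable v) :
    En q p (fun x => v (rot a x)) = En q p v := by
  have r1 : MeasurePreserving (fun z : X m × X m => (rot a z.1, rot a z.2)) volume volume :=
    (mp_rot a).prod (mp_rot a)
  unfold En
  rw [← r1.lintegral_comp (measurable_ed q p hv)]
  congr 1; funext z
  unfold ed
  simp [rot]

lemma J_abs_le {p : ℝ} (hp : 1 < p) (a b : ℝ) : J p |a| |b| ≤ J p a b := by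
  unfold J
  exact ENNReal.ofReal_le_ofReal (rpow_le_rpow (abs_nonneg _) (abs_abs_sub_abs_le _ _) (by linarith))

lemma En_abs_le {q p : ℝ} (hp : 1 < p) (v : X m → ℝ) :
    En q p (fun x => |v x|) ≤ En q p v := by
  refine lintegral_mono fun z => ?_
  exact mul_le_mul_left (J_abs_le hp _ _) _

lemma K_pos {q r : ℝ} (hq : 1 < q) (θ : Tc) : K q r θ ≠ 0 := KR_pos hq

lemma En_abs_eq {q p : ℝ} (hq : 1 < q) (hp : 1 < p) {v : X m → ℝ} (hv : Measurable v)
    (hfin : En q p v ≠ ⊤) (heq : En q p (fun x => |v x|) = En q p v) :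
    (∀ᵐ x : X m, 0 ≤ v x) ∨ (∀ᵐ x : X m, v x ≤ 0) := by
  have hae : ed q p (fun x => |v x|) =ᵐ[volume] ed q p v := by
    refine ae_eq_of_ae_le_of_lintegral_le (Filter.Eventually.of_forall
      (fun z => mul_le_mul_left (J_abs_le hp _ _) _)) ?_
      (measurable_ed q p hv).aemeasurable ?_
    · have := heq; unfold En at this; rw [this]; exact hfin
    · have := heq; unfold En at this; rw [this]
  have hlt := ae_lt_top (measurable_ed q p hv) hfin
  have hnull := null_of_prod_null (m := m)
    (P := {x : X m | v x < 0})
    (Q := {x : X m | 0 < v x}) (by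
      filter_upwards [hae, hlt] with z h1 h2
      rintro ⟨hx, hy⟩
      obtain ⟨x, y⟩ := z
      simp only [Set.mem_setOf_eq] at hx hy
      unfold ed at h1 h2
      dsimp only at h1 h2
      have hJ : J p |v x| |v y| < J p (v x) (v y) := by
        unfold J
        refine (ENNReal.ofReal_lt_ofReal_iff_of_nonneg (by positivity)).2 ?_
        refine rpow_lt_rpow (abs_nonneg _) ?_ (by linarith)
        rw [abs_of_neg hx, abs_of_pos hy, abs_of_neg (by linarith : v x - v y < 0), abs_lt]
        constructor <;> linarith
      have hK0 := K_pos (r := ‖x.2 - y.2‖) hq (x.1 - y.1)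
      have hKt : K q ‖x.2 - y.2‖ (x.1 - y.1) ≠ ⊤ := by
        intro h
        rw [h, ENNReal.mul_top (ne_of_gt ((zero_le).trans_lt hJ))] at h2
        exact lt_irrefl _ h2
      rw [ENNReal.mul_left_inj hK0 hKt] at h1
      exact hJ.ne h1)
  rcases hnull with h | h
  · left
    filter_upwards [measure_eq_zero_iff_ae_notMem.1 h] with x hx
    exact not_lt.1 hx
  · right
    filter_upwards [measure_eq_zero_iff_ae_notMem.1 h] with x hx
    exact not_lt.1 hx

end Per

end

section

namespace Per

lemma norm_eq_abs_rep (θ : Tc) : ‖θ‖ = |rep θ| := by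
  conv_lhs => rw [← coe_rep θ]
  refine (AddCircle.norm_coe_eq_abs_iff (2 * π) (by positivity)).2 ?_
  have := rep_mem θ
  rw [abs_of_pos (by positivity : 0 < 2 * π), abs_le]
  constructor <;> linarith [this.1, this.2]

lemma ccos_lt_iff (θ θ' : Tc) : ccos θ' < ccos θ ↔ ‖θ‖ < ‖θ'‖ := by
  have hm : ∀ θ : Tc, |rep θ| ∈ Set.Icc 0 π := fun θ =>
    ⟨abs_nonneg _, abs_le.2 ⟨(rep_mem θ).1.le, (rep_mem θ).2⟩⟩
  rw [norm_eq_abs_rep, norm_eq_abs_rep]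
  unfold ccos
  rw [← cos_abs (rep θ), ← cos_abs (rep θ')]
  exact strictAntiOn_cos.lt_iff_gt (hm θ') (hm θ)

variable {W : Type*} [MeasurableSpace W]

def fib (A : Set (Tc × W)) (w : W) : Set Tc := (fun θ => (θ, w)) ⁻¹' A

lemma measurableSet_fib {A : Set (Tc × W)} (hA : MeasurableSet A) (w : W) :
    MeasurableSet (fib A w) := measurable_prodMk_right hA

def bs (A : Set (Tc × W)) : Set (Tc × W) := {z | ‖z.1‖ < (volume (fib A z.2)).toReal / 2}

lemma measurableSet_bs {A : Set (Tc × W)} (hA : MeasurableSet A) : MeasurableSet (bs A) := by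
  have h : Measurable fun w : W => volume (fib A w) := measurable_measure_prodMk_right hA
  refine measurableSet_lt measurable_fst.norm ?_
  exact ((h.comp measurable_snd).ennreal_toReal).div_const 2

lemma vol_le (S : Set Tc) : volume S ≤ ENNReal.ofReal (2 * π) :=
  (measure_mono (Set.subset_univ S)).trans (AddCircle.measure_univ (2 * π)).le

lemma vol_ball (r : ℝ) : volume {θ : Tc | ‖θ‖ < r} = ENNReal.ofReal (min (2 * π) (2 * r)) := by
  have e : {θ : Tc | ‖θ‖ < r} = Metric.ball 0 r := by ext; simp
  rw [e, ← AddCircle.volume_closedBall (x := (0 : Tc))]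
  exact (measure_congr AddCircle.closedBall_ae_eq_ball).symm

lemma vol_fib_bs (A : Set (Tc × W)) (w : W) : volume (fib (bs A) w) = volume (fib A w) := by
  have h : fib (bs A) w = {θ : Tc | ‖θ‖ < (volume (fib A w)).toReal / 2} := rfl
  rw [h, vol_ball]
  have h1 := vol_le (fib A w)
  have h2 : (volume (fib A w)).toReal ≤ 2 * π := ENNReal.toReal_le_of_le_ofReal (by positivity) h1
  rw [min_eq_right (by linarith), mul_div_cancel₀ _ (by norm_num : (2:ℝ) ≠ 0), ENNReal.ofReal_toReal]
  exact ne_top_of_le_ne_top ENNReal.ofReal_ne_top h1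

noncomputable def sg (c : Tc) (z : Tc × W) : Tc × W := (c - z.1, z.2)

lemma sg_sg (c : Tc) (z : Tc × W) : sg c (sg c z) = z := by simp [sg]

lemma mp_sg (ν : Measure W) [SFinite ν] (c : Tc) :
    MeasurePreserving (sg (W := W) c) ((volume : Measure Tc).prod ν) ((volume : Measure Tc).prod ν) :=
  (Measure.measurePreserving_sub_left volume c).prod (MeasurePreserving.id ν)

def pA (c : Tc) (A : Set (Tc × W)) : Set (Tc × W) :=
  {z | (ccos (c - z.1) < ccos z.1 ∧ (z ∈ A ∨ sg c z ∈ A)) ∨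
    (ccos z.1 < ccos (c - z.1) ∧ (z ∈ A ∧ sg c z ∈ A)) ∨
    (ccos z.1 = ccos (c - z.1) ∧ z ∈ A)}

lemma mem_pA (c : Tc) (A : Set (Tc × W)) (z : Tc × W) : z ∈ pA c A ↔
    (ccos (c - z.1) < ccos z.1 ∧ (z ∈ A ∨ sg c z ∈ A)) ∨
    (ccos z.1 < ccos (c - z.1) ∧ (z ∈ A ∧ sg c z ∈ A)) ∨
    ((¬ ccos (c - z.1) < ccos z.1 ∧ ¬ ccos z.1 < ccos (c - z.1)) ∧ z ∈ A) := by
  have h : (¬ ccos (c - z.1) < ccos z.1 ∧ ¬ ccos z.1 < ccos (c - z.1)) ↔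
      ccos z.1 = ccos (c - z.1) := by
    rw [not_lt, not_lt]; exact ⟨fun h => le_antisymm h.1 h.2, fun h => ⟨h.le, h.ge⟩⟩
  rw [h]; exact Iff.rfl

lemma tri (a b : ℝ) : (a < b ∧ ¬ b < a) ∨ (¬ a < b ∧ ¬ b < a) ∨ (¬ a < b ∧ b < a) := by
  rcases lt_trichotomy a b with h | h | h
  · exact Or.inl ⟨h, h.not_gt⟩
  · exact Or.inr (Or.inl ⟨h.not_lt, h.not_gt⟩)
  · exact Or.inr (Or.inr ⟨h.not_gt, h⟩)

lemma measurable_sg (c : Tc) : Measurable (sg (W := W) c) :=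
  (measurable_fst.const_sub c).prodMk measurable_snd

lemma measurableSet_pA (c : Tc) {A : Set (Tc × W)} (hA : MeasurableSet A) :
    MeasurableSet (pA c A) := by
  have h1 : Measurable (fun x : Tc × W => ccos x.1) := measurable_ccos.comp measurable_fst
  have h2 : Measurable (fun x : Tc × W => ccos (c - x.1)) :=
    measurable_ccos.comp (measurable_fst.const_sub c)
  have h3 := measurable_sg c hA
  exact ((measurableSet_lt h2 h1).inter (hA.union h3)).union
    (((measurableSet_lt h1 h2).inter (hA.inter h3)).union ((measurableSet_eq_fun h1 h2).inter hA))

/-- comparison of measures by symmetrisation -/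
lemma sym_le {Y : Type*} [MeasurableSpace Y] {μ : Measure Y} {σ : Y → Y}
    (hσ : MeasurePreserving σ μ μ) {P E Q : Set Y} (hP : MeasurableSet P) (hE : MeasurableSet E)
    (hQ : MeasurableSet Q)
    (h : ∀ z, P.indicator (1 : Y → ℝ≥0∞) z + P.indicator 1 (σ z) +
      2 * (E.indicator (1 : Y → ℝ≥0∞) z + E.indicator 1 (σ z)) ≤
      Q.indicator (1 : Y → ℝ≥0∞) z + Q.indicator 1 (σ z)) :
    μ P + 2 * μ E ≤ μ Q := by
  have hm : ∀ S : Set Y, MeasurableSet S → Measurable (S.indicator (1 : Y → ℝ≥0∞)) := fun S hS =>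
    measurable_one.indicator hS
  have hi : ∀ S : Set Y, MeasurableSet S → ∫⁻ z, (S.indicator (1 : Y → ℝ≥0∞) z +
      S.indicator 1 (σ z)) ∂μ = 2 * μ S := by
    intro S hS
    rw [lintegral_add_left (hm S hS), hσ.lintegral_comp (hm S hS), lintegral_indicator_one hS]
    ring
  have h1 := lintegral_mono (μ := μ) h
  have mm : ∀ S : Set Y, MeasurableSet S → Measurable (fun z => S.indicator (1 : Y → ℝ≥0∞) z +
      S.indicator 1 (σ z)) := fun S hS => (hm S hS).add ((hm S hS).comp hσ.measurable)
  rw [lintegral_add_left (mm P hP), lintegral_const_mul _ (mm E hE), hi P hP, hi E hE, hi Q hQ,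
    ← mul_add] at h1
  exact (ENNReal.mul_le_mul_iff_right (by norm_num) (by norm_num)).1 h1

lemma vol_fib_pA (c : Tc) {A : Set (Tc × W)} (hA : MeasurableSet A) (w : W) :
    volume (fib (pA c A) w) = volume (fib A w) := by
  have hσ : MeasurePreserving (fun θ : Tc => c - θ) volume volume :=
    Measure.measurePreserving_sub_left volume c
  have key : ∀ θ : Tc, (fib (pA c A) w).indicator (1 : Tc → ℝ≥0∞) θ +
      (fib (pA c A) w).indicator 1 (c - θ) =
      (fib A w).indicator (1 : Tc → ℝ≥0∞) θ + (fib A w).indicator 1 (c - θ) := by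
    intro θ
    have e1 : θ ∈ fib (pA c A) w ↔ _ := mem_pA c A (θ, w)
    have e2 : c - θ ∈ fib (pA c A) w ↔ _ := mem_pA c A (c - θ, w)
    have e3 : θ ∈ fib A w ↔ (θ, w) ∈ A := Iff.rfl
    have e4 : c - θ ∈ fib A w ↔ (c - θ, w) ∈ A := Iff.rfl
    simp only [sg, sub_sub_cancel] at e1 e2
    by_cases a : (θ, w) ∈ A <;> by_cases b : (c - θ, w) ∈ A <;>
    rcases tri (ccos θ) (ccos (c - θ)) with ⟨h1, h2⟩ | ⟨h1, h2⟩ | ⟨h1, h2⟩ <;>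
    simp only [a, b, h1, h2, and_true, true_and, and_false, false_and, or_true, true_or,
      or_false, false_or, iff_true, iff_false, not_true_eq_false, not_false_eq_true] at e1 e2 e3 e4 <;>
    simp only [Set.indicator, e1, e2, e3, e4, if_true, if_false, Pi.one_apply, add_zero, zero_add]
  have hP := measurableSet_fib (measurableSet_pA c hA) w
  have hQ := measurableSet_fib hA w
  apply le_antisymm
  · simpa using sym_le hσ hP MeasurableSet.empty hQ (fun z => by simpa using (key z).le)
  · simpa using sym_le hσ hQ MeasurableSet.empty hP (fun z => by simpa using (key z).ge)

lemma bs_pA (c : Tc) {A : Set (Tc × W)} (hA : MeasurableSet A) : bs (pA c A) = bs A := by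
  unfold bs; ext z; simp [vol_fib_pA c hA]

def eset (c : Tc) (A : Set (Tc × W)) : Set (Tc × W) := {z | z ∈ bs A \ A ∧ sg c z ∈ A \ bs A}

open scoped symmDiff in
lemma gain_step (ν : Measure W) [SFinite ν] (c : Tc) {A : Set (Tc × W)} (hA : MeasurableSet A) :
    ((volume : Measure Tc).prod ν) (pA c A ∆ bs A) + 2 * ((volume : Measure Tc).prod ν) (eset c A)
      ≤ ((volume : Measure Tc).prod ν) (A ∆ bs A) := by
  have hB := measurableSet_bs hA
  refine sym_le (mp_sg ν c) ((measurableSet_pA c hA).symmDiff hB) ?_ (hA.symmDiff hB) ?_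
  · exact (hB.diff hA).inter (measurable_sg c (hA.diff hB))
  intro z
  have hb1 : z ∈ bs A → sg c z ∉ bs A → ccos (c - z.1) < ccos z.1 := by
    intro h1 h2
    rw [ccos_lt_iff]
    exact lt_of_lt_of_le h1 (not_lt.1 h2)
  have hb2 : sg c z ∈ bs A → z ∉ bs A → ccos z.1 < ccos (c - z.1) := by
    intro h1 h2
    rw [ccos_lt_iff]
    exact lt_of_lt_of_le h1 (not_lt.1 h2)
  have hz := mem_pA c A z
  have hz' := mem_pA c A (sg c z)
  have hs : (sg c z).1 = c - z.1 := rfl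
  rw [sg_sg, hs, sub_sub_cancel] at hz'
  have he : z ∈ eset c A ↔ z ∈ bs A \ A ∧ sg c z ∈ A \ bs A := Iff.rfl
  have he' : sg c z ∈ eset c A ↔ sg c z ∈ bs A \ A ∧ sg c (sg c z) ∈ A \ bs A := Iff.rfl
  rw [sg_sg] at he'
  by_cases a : z ∈ A <;> by_cases a' : sg c z ∈ A <;>
  by_cases b : z ∈ bs A <;> by_cases b' : sg c z ∈ bs A <;>
  rcases tri (ccos z.1) (ccos (c - z.1)) with ⟨h1, h2⟩ | ⟨h1, h2⟩ | ⟨h1, h2⟩ <;>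
  simp only [a, a', b, b', h1, h2, lt_irrefl, Set.mem_sdiff, not_true_eq_false, not_false_eq_true,
    and_true, true_and, and_false, false_and, or_true, true_or, or_false, false_or, iff_true, iff_false,
    forall_true_left, false_imp_iff] at hz hz' he he' hb1 hb2 <;>
  first
  | (exfalso; exact hb1)
  | (exfalso; exact hb2)
  | (simp [Set.indicator, Set.mem_symmDiff, one_add_one_eq_two, *]; done)
  | (simp [Set.indicator, Set.mem_symmDiff, *]; norm_num)

end Per

end

section
open scoped ENNReal symmDiff

namespace Per
variable {W : Type*} [MeasurableSpace W]

lemma diff_vol_eq {Y : Type*} [MeasurableSpace Y] {μ : Measure Y} [IsFiniteMeasure μ] {S T : Set Y}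
    (hS : MeasurableSet S) (hT : MeasurableSet T) (h : μ S = μ T) : μ (S \ T) = μ (T \ S) := by
  have h1 := measure_inter_add_sdiff (μ := μ) S hT
  have h2 := measure_inter_add_sdiff (μ := μ) T hS
  rw [Set.inter_comm] at h2
  rw [← h2, ← h1] at h
  exact (ENNReal.add_right_inj (measure_ne_top _ _)).1 h

noncomputable def dl (ν : Measure W) (A : Set (Tc × W)) : ℝ≥0∞ :=
  ((volume : Measure Tc).prod ν) (A \ bs A)

lemma dl_eq (ν : Measure W) [SFinite ν] {A : Set (Tc × W)} (hA : MeasurableSet A) :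
    dl ν A = ∫⁻ w, volume (fib (A \ bs A) w) ∂ν := by
  unfold dl
  rw [Measure.prod_apply_symm (hA.diff (measurableSet_bs hA))]; rfl

lemma vol_fib_diff {A : Set (Tc × W)} (hA : MeasurableSet A) (w : W) :
    volume (fib (bs A \ A) w) = volume (fib (A \ bs A) w) :=
  diff_vol_eq (measurableSet_fib (measurableSet_bs hA) w) (measurableSet_fib hA w) (vol_fib_bs A w)

lemma dl_eq' (ν : Measure W) [SFinite ν] {A : Set (Tc × W)} (hA : MeasurableSet A) :
    ((volume : Measure Tc).prod ν) (bs A \ A) = dl ν A := by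
  rw [dl_eq ν hA, Measure.prod_apply_symm ((measurableSet_bs hA).diff hA)]
  exact lintegral_congr (fun w => vol_fib_diff hA w)

lemma dl_symmDiff (ν : Measure W) [SFinite ν] {A : Set (Tc × W)} (hA : MeasurableSet A) :
    ((volume : Measure Tc).prod ν) (A ∆ bs A) = 2 * dl ν A := by
  rw [measure_symmDiff_eq hA.nullMeasurableSet (measurableSet_bs hA).nullMeasurableSet,
    dl_eq' ν hA]
  unfold dl; ring

lemma dl_gain (ν : Measure W) [SFinite ν] (c : Tc) {A : Set (Tc × W)} (hA : MeasurableSet A) :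
    dl ν (pA c A) + ((volume : Measure Tc).prod ν) (eset c A) ≤ dl ν A := by
  have h := gain_step ν c hA
  have h2 := dl_symmDiff ν (measurableSet_pA c hA)
  rw [bs_pA c hA] at h2
  rw [h2, dl_symmDiff ν hA, ← mul_add] at h
  exact (ENNReal.mul_le_mul_iff_right (by norm_num) (by norm_num)).1 h

lemma eset_int (ν : Measure W) [SFinite ν] {A : Set (Tc × W)} (hA : MeasurableSet A) :
    ∫⁻ c : Tc, ((volume : Measure Tc).prod ν) (eset c A) =
      ∫⁻ w, volume (fib (A \ bs A) w) * volume (fib (A \ bs A) w) ∂ν := by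
  have hB := measurableSet_bs hA
  have hS : MeasurableSet (bs A \ A) := hB.diff hA
  have hT : MeasurableSet (A \ bs A) := hA.diff hB
  set S := bs A \ A with hSd
  set T := A \ bs A with hTd
  set ξ : Set ((Tc × W) × Tc) := {z | z.1 ∈ S ∧ (z.2 - z.1.1, z.1.2) ∈ T} with hξ
  have hmξ : MeasurableSet ξ := by
    have h2 : Measurable (fun z : (Tc × W) × Tc => (z.2 - z.1.1, z.1.2)) :=
      (measurable_snd.sub (measurable_fst.comp measurable_fst)).prodMk
        (measurable_snd.comp measurable_fst)
    exact (measurable_fst hS).inter (h2 hT)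
  have e1 : ∫⁻ c : Tc, ((volume : Measure Tc).prod ν) (eset c A) =
      (((volume : Measure Tc).prod ν).prod (volume : Measure Tc)) ξ := by
    rw [Measure.prod_apply_symm hmξ]; rfl
  rw [e1, Measure.prod_apply hmξ]
  have hg : Measurable fun w : W => volume (fib T w) := measurable_measure_prodMk_right hT
  have e2 : ∀ z : Tc × W, volume (Prod.mk z ⁻¹' ξ) =
      S.indicator 1 z * volume (fib T z.2) := by
    intro z
    by_cases hz : z ∈ S
    · have : Prod.mk z ⁻¹' ξ = (fun c => c - z.1) ⁻¹' (fib T z.2) := by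
        ext c; simp [hξ, hz, fib]
      rw [this, (measurePreserving_sub_right volume z.1).measure_preimage
        (measurableSet_fib hT _).nullMeasurableSet]
      simp [hz]
    · have : Prod.mk z ⁻¹' ξ = ∅ := by
        ext c; simp [hξ, hz]
      simp [this, hz]
  simp_rw [e2]
  have hm3 : Measurable (fun x : Tc × W => S.indicator (1 : Tc × W → ℝ≥0∞) x * volume (fib T x.2)) :=
    (measurable_one.indicator hS).mul (hg.comp measurable_snd)
  rw [lintegral_prod_symm _ hm3.aemeasurable]
  refine lintegral_congr fun w => ?_
  dsimp only
  have hm4 : Measurable (fun x : Tc => S.indicator (1 : Tc × W → ℝ≥0∞) (x, w)) :=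
    (measurable_one.indicator hS).comp measurable_prodMk_right
  rw [lintegral_mul_const _ hm4]
  congr 1
  rw [← vol_fib_diff hA w, ← lintegral_indicator_one (measurableSet_fib hS w)]
  rfl

lemma eset_int_ge (ν : Measure W) [IsProbabilityMeasure ν] {A : Set (Tc × W)}
    (hA : MeasurableSet A) (hfin : dl ν A ≠ ⊤) :
    dl ν A * dl ν A ≤ ∫⁻ c : Tc, ((volume : Measure Tc).prod ν) (eset c A) := by
  rw [eset_int ν hA]
  set f : W → ℝ≥0∞ := fun w => volume (fib (A \ bs A) w) with hf
  have hfm : Measurable f := measurable_measure_prodMk_right (hA.diff (measurableSet_bs hA))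
  have hI : dl ν A = ∫⁻ w, f w ∂ν := dl_eq ν hA
  set I := dl ν A
  have hpt : ∀ w, 2 * I * f w ≤ f w * f w + I * I := by
    intro w
    rcases le_total (f w) I with h | h
    · have := ennreal_rearr h h
      calc 2 * I * f w = f w * I + I * f w := by ring
        _ ≤ _ := this
        _ = _ := by ring
    · have := ennreal_rearr h h
      calc 2 * I * f w = I * f w + f w * I := by ring
        _ ≤ _ := this
  have h2 := lintegral_mono (μ := ν) hpt
  have hff : Measurable (fun w => f w * f w) := hfm.mul hfm
  rw [lintegral_const_mul _ hfm, ← hI, lintegral_add_left hff, lintegral_const,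
    measure_univ, mul_one, mul_assoc, two_mul] at h2
  exact (ENNReal.add_le_add_iff_right (ENNReal.mul_ne_top hfin hfin)).1 h2

lemma dl_ne_top (ν : Measure W) [IsProbabilityMeasure ν] (A : Set (Tc × W)) : dl ν A ≠ ⊤ :=
  measure_ne_top _ _

lemma exists_gain (ν : Measure W) [IsProbabilityMeasure ν] {A : Set (Tc × W)}
    (hA : MeasurableSet A) : ∃ c : Tc, dl ν (pA c A) + dl ν A * dl ν A / 8 ≤ dl ν A := by
  have hfin := dl_ne_top ν A
  by_contra hcon
  push Not at hcon
  have hlt : ∀ c : Tc, ((volume : Measure Tc).prod ν) (eset c A) ≤ dl ν A * dl ν A / 8 := by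
    intro c
    by_contra hh
    push Not at hh
    exact absurd ((hcon c).trans_le ((add_le_add_right hh.le _).trans (dl_gain ν c hA))) (lt_irrefl _)
  have h1 := (eset_int_ge ν hA hfin).trans (lintegral_mono hlt)
  have hne : dl ν A ≠ 0 := by
    intro h0
    have h3 := dl_gain ν 0 hA
    have := hcon 0
    rw [h0] at this h3
    simp at this h3
    exact this.ne' h3.1
  rw [lintegral_const, AddCircle.measure_univ] at h1
  set I := dl ν A
  have hII : I * I ≠ 0 := mul_ne_zero hne hne
  have hIt : I * I ≠ ⊤ := ENNReal.mul_ne_top hfin hfin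
  have : I * I / 8 * ENNReal.ofReal (2 * π) < I * I := by
    have h8 : ENNReal.ofReal (2 * π) < 8 := by
      rw [show (8 : ℝ≥0∞) = ENNReal.ofReal 8 by norm_num]
      exact (ENNReal.ofReal_lt_ofReal_iff (by norm_num)).2 (by linarith [pi_lt_four])
    calc I * I / 8 * ENNReal.ofReal (2 * π) < I * I / 8 * 8 := by
          refine ENNReal.mul_lt_mul_right ?_ ?_ h8
          · exact ENNReal.div_ne_zero.2 ⟨hII, by norm_num⟩
          · exact ENNReal.div_ne_top hIt (by norm_num)
      _ = I * I := ENNReal.div_mul_cancel (by norm_num) (by norm_num)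
  exact absurd (h1.trans_lt this) (lt_irrefl _)

end Per

end

section
open scoped ENNReal symmDiff

namespace Per
variable {m : ℕ}

abbrev Wm (m : ℕ) := Ev m × ℝ

noncomputable def nu (m : ℕ) : Measure (Wm m) := (volume : Measure (Wm m)).toFinite

instance : IsProbabilityMeasure (nu m) := by unfold nu; infer_instance

noncomputable def lam (m : ℕ) : Measure (Tc × Wm m) := (volume : Measure Tc).prod (nu m)

lemma ae_lam : ae (lam m) = ae (volume : Measure (Tc × Wm m)) := by
  apply le_antisymm
  · exact Measure.AbsolutelyContinuous.ae_le (Measure.AbsolutelyContinuous.prod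
      Measure.AbsolutelyContinuous.rfl (toFinite_absolutelyContinuous volume))
  · exact Measure.AbsolutelyContinuous.ae_le (Measure.AbsolutelyContinuous.prod
      Measure.AbsolutelyContinuous.rfl (absolutelyContinuous_toFinite volume))

def lev (v : X m → ℝ) : Set (Tc × Wm m) := {z | z.2.2 < v (z.1, z.2.1)}

lemma mem_lev (v : X m → ℝ) (z : Tc × Wm m) : z ∈ lev v ↔ z.2.2 < v (z.1, z.2.1) := Iff.rfl

lemma measurableSet_lev {v : X m → ℝ} (hv : Measurable v) : MeasurableSet (lev v) :=
  measurableSet_lt (measurable_snd.comp measurable_snd)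
    (hv.comp (measurable_fst.prodMk (measurable_fst.comp measurable_snd)))

lemma lev_pol (c : Tc) (v : X m → ℝ) : lev (pol c v) = pA c (lev v) := by
  ext z
  rw [mem_pA, mem_lev, mem_lev, mem_lev]
  have e : v (refl c (z.1, z.2.1)) = v ((sg c z).1, (sg c z).2.1) := rfl
  have e2 : (sg c z).2.2 = z.2.2 := rfl
  rw [← e, e2]
  unfold pol
  dsimp only
  rcases tri (ccos z.1) (ccos (c - z.1)) with ⟨h1, h2⟩ | ⟨h1, h2⟩ | ⟨h1, h2⟩ <;>
    simp [h1, h2]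

noncomputable def star (v : X m → ℝ) (x : X m) : ℝ :=
  ∫ t in Set.Ioi (0 : ℝ), (bs (lev v)).indicator (fun _ => (1 : ℝ)) (x.1, (x.2, t))

lemma measurable_star {v : X m → ℝ} (hv : Measurable v) : Measurable (star v) := by
  have hB := measurableSet_bs (measurableSet_lev hv)
  have h1 : Measurable (fun z : X m × ℝ =>
      (bs (lev v)).indicator (fun _ => (1 : ℝ)) (z.1.1, (z.1.2, z.2))) := by
    refine (measurable_const.indicator hB).comp ?_
    exact (measurable_fst.comp measurable_fst).prodMk
      ((measurable_snd.comp measurable_fst).prodMk measurable_snd)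
  exact (StronglyMeasurable.integral_prod_right' (ν := volume.restrict (Set.Ioi (0 : ℝ)))
    h1.stronglyMeasurable).measurable

lemma star_nonneg (v : X m → ℝ) (x : X m) : 0 ≤ star v x := by
  refine integral_nonneg fun t => ?_
  exact Set.indicator_nonneg (fun _ _ => zero_le_one) _

lemma fib_lev_anti (v : X m → ℝ) (x : Ev m) {s t : ℝ} (h : s ≤ t) :
    fib (lev v) (x, t) ⊆ fib (lev v) (x, s) := by
  intro θ hθ
  exact lt_of_le_of_lt h hθ

lemma vol_fib_ne_top {W : Type*} (A : Set (Tc × W)) (w : W) : volume (fib A w) ≠ ⊤ :=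
  measure_ne_top _ _

lemma mem_bs_lev (v : X m → ℝ) (θ : Tc) (x : Ev m) (t : ℝ) : (θ, (x, t)) ∈ bs (lev v) ↔
    ‖θ‖ < (volume (fib (lev v) (x, t))).toReal / 2 := Iff.rfl

lemma bs_anti (v : X m → ℝ) (θ : Tc) (x : Ev m) {s t : ℝ} (h : s ≤ t)
    (ht : (θ, (x, t)) ∈ bs (lev v)) : (θ, (x, s)) ∈ bs (lev v) := by
  rw [mem_bs_lev] at *
  have := ENNReal.toReal_mono (vol_fib_ne_top _ _) (measure_mono (μ := volume) (fib_lev_anti v x h))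
  linarith

lemma bs_right (v : X m → ℝ) (θ : Tc) (x : Ev m) {t : ℝ}
    (ht : (θ, (x, t)) ∈ bs (lev v)) : ∃ t' > t, (θ, (x, t')) ∈ bs (lev v) := by
  have hmono : Monotone fun n : ℕ => fib (lev v) (x, t + 1 / ((n : ℝ) + 1)) := by
    intro a b hab
    exact fib_lev_anti v x (by gcongr)
  have hU : (⋃ n : ℕ, fib (lev v) (x, t + 1 / ((n : ℝ) + 1))) = fib (lev v) (x, t) := by
    apply Set.Subset.antisymm
    · exact Set.iUnion_subset fun n => fib_lev_anti v x (by
        have : 0 ≤ 1 / ((n : ℝ) + 1) := by positivity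
        linarith)
    · intro θ hθ
      have h0 : 0 < v (θ, x) - t := sub_pos.2 hθ
      obtain ⟨n, hn⟩ := exists_nat_one_div_lt h0
      refine Set.mem_iUnion.2 ⟨n, ?_⟩
      change t + 1 / ((n : ℝ) + 1) < v (θ, x)
      linarith
  have hT := tendsto_measure_iUnion_atTop (μ := (volume : Measure Tc)) hmono
  rw [hU] at hT
  have hT' := (ENNReal.tendsto_toReal (vol_fib_ne_top _ _)).comp hT
  rw [mem_bs_lev] at ht
  obtain ⟨n, hn⟩ := (hT'.eventually (lt_mem_nhds (by linarith : 2 * ‖θ‖ < _))).exists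
  refine ⟨t + 1 / ((n : ℝ) + 1), ?_, ?_⟩
  · have : 0 < 1 / ((n : ℝ) + 1) := by positivity
    linarith
  · rw [mem_bs_lev]; simp only [Function.comp] at hn; linarith

lemma bs_bdd {v : X m → ℝ} (hv : Measurable v) {θ : Tc} (hθ : θ ≠ 0) (x : Ev m) :
    ∃ T, 0 ≤ T ∧ (θ, (x, T)) ∉ bs (lev v) := by
  have hanti : Antitone fun n : ℕ => fib (lev v) (x, (n : ℝ)) := by
    intro a b hab
    exact fib_lev_anti v x (by exact_mod_cast hab)
  have hI : (⋂ n : ℕ, fib (lev v) (x, (n : ℝ))) = ∅ := by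
    ext θ
    simp only [Set.mem_iInter, Set.mem_empty_iff_false, iff_false, not_forall]
    obtain ⟨n, hn⟩ := exists_nat_ge (v (θ, x))
    exact ⟨n, fun h => absurd h (not_lt.2 hn)⟩
  have hT := tendsto_measure_iInter_atTop (μ := (volume : Measure Tc))
    (fun n : ℕ => (measurableSet_fib (measurableSet_lev hv) (x, (n : ℝ))).nullMeasurableSet) hanti
    ⟨0, measure_ne_top _ _⟩
  rw [hI, measure_empty] at hT
  have hT' := (ENNReal.tendsto_toReal ENNReal.zero_ne_top).comp hT
  have : 0 < ‖θ‖ := norm_pos_iff.2 hθ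
  obtain ⟨n, hn⟩ := (hT'.eventually (gt_mem_nhds (by simpa using this : (0 : ℝ≥0∞).toReal < 2 * ‖θ‖))).exists
  refine ⟨n, Nat.cast_nonneg _, ?_⟩
  rw [mem_bs_lev, not_lt]; simp only [Function.comp] at hn; linarith

lemma star_gt {v : X m → ℝ} (hv : Measurable v) {θ : Tc} (hθ : θ ≠ 0) (x : Ev m) {t : ℝ}
    (ht : 0 ≤ t) : t < star v (θ, x) ↔ (θ, (x, t)) ∈ bs (lev v) := by
  have hB := measurableSet_bs (measurableSet_lev hv)
  set S : Set ℝ := {s | (θ, (x, s)) ∈ bs (lev v)} with hS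
  have hSm : MeasurableSet S :=
    (measurable_const.prodMk (measurable_const.prodMk measurable_id)) hB
  have e : star v (θ, x) = (volume (S ∩ Set.Ioi 0)).toReal := by
    unfold star
    have : (fun t : ℝ => (bs (lev v)).indicator (fun _ => (1 : ℝ)) (θ, (x, t))) =
      S.indicator 1 := by
      funext s; rfl
    dsimp only
    rw [this, integral_indicator_one hSm, Measure.real, Measure.restrict_apply hSm]
  obtain ⟨T, hT0, hT⟩ := bs_bdd hv hθ x
  have hsub : ∀ T : ℝ, 0 ≤ T → (θ, (x, T)) ∉ bs (lev v) →
      volume (S ∩ Set.Ioi 0) ≤ ENNReal.ofReal T := by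
    intro T hT0 hT
    have : S ∩ Set.Ioi 0 ⊆ Set.Ioc 0 T := by
      rintro s ⟨h1, h2⟩
      refine ⟨h2, ?_⟩
      by_contra hh
      exact hT (bs_anti v θ x (not_le.1 hh).le h1)
    calc _ ≤ volume (Set.Ioc 0 T) := measure_mono this
      _ = _ := by simp
  rw [e]
  constructor
  · intro h
    by_contra hh
    exact absurd (ENNReal.toReal_le_of_le_ofReal ht (hsub t ht hh)) (not_le.2 h)
  · intro h
    obtain ⟨t', ht', h'⟩ := bs_right v θ x h
    refine lt_of_lt_of_le ht' ?_
    have hfin : volume (S ∩ Set.Ioi 0) ≠ ⊤ := ne_top_of_le_ne_top ENNReal.ofReal_ne_top (hsub T hT0 hT)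
    have hle : ENNReal.ofReal t' ≤ volume (S ∩ Set.Ioi 0) := by
      calc ENNReal.ofReal t' = volume (Set.Ioc 0 t') := by simp
        _ ≤ volume (S ∩ Set.Ioi 0) :=
          measure_mono (fun s hs => ⟨bs_anti v θ x hs.2 h', hs.1⟩)
    have := ENNReal.toReal_mono hfin hle
    rwa [ENNReal.toReal_ofReal (by linarith)] at this

lemma ae_theta : ∀ᵐ θ : Tc, θ ≠ 0 ∧ ‖θ‖ < π := by
  have h1 : ∀ᵐ θ : Tc, ‖θ‖ < π := by
    have h := vol_ball π
    rw [min_self, ← AddCircle.measure_univ (2 * π)] at h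
    refine (ae_iff_measure_eq ?_).2 h
    exact (measurableSet_lt measurable_norm measurable_const).nullMeasurableSet
  have h2 : ∀ᵐ θ : Tc, θ ≠ 0 := by
    rw [ae_iff]
    have := AddCircle.volume_closedBall (2 * π) (x := (0 : Tc)) 0
    simpa [pi_pos.le] using this
  filter_upwards [h1, h2] with θ a b using ⟨b, a⟩

lemma lev_star {v : X m → ℝ} (hv : Measurable v) (h0 : ∀ x, 0 ≤ v x) :
    lev (star v) =ᵐ[(volume : Measure (Tc × Wm m))] bs (lev v) := by
  have h : ∀ᵐ z : Tc × Wm m, z.1 ≠ 0 ∧ ‖z.1‖ < π := Measure.quasiMeasurePreserving_fst.ae ae_theta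
  filter_upwards [h] with z hz
  obtain ⟨θ, x, t⟩ := z
  apply propext
  change t < star v (θ, x) ↔ (θ, (x, t)) ∈ bs (lev v)
  rcases le_or_gt 0 t with ht | ht
  · exact star_gt hv hz.1 x ht
  · have h1 : t < star v (θ, x) := ht.trans_le (star_nonneg v _)
    have h2 : fib (lev v) (x, t) = Set.univ := by
      ext θ; simp only [Set.mem_univ, iff_true]
      exact ht.trans_le (h0 (θ, x))
    rw [mem_bs_lev, h2, AddCircle.measure_univ, ENNReal.toReal_ofReal (by positivity)]
    simp only [h1, true_iff]
    have := hz.2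
    dsimp only at this; linarith

lemma ae_swap {P : Tc × Wm m → Prop} (h : ∀ᵐ z, P z) :
    ∀ᵐ x : X m, ∀ᵐ t : ℝ, P (x.1, (x.2, t)) := by
  have h1 : ∀ᵐ z : X m × ℝ, P (MeasurableEquiv.prodAssoc z) :=
    (volume_preserving_prodAssoc).quasiMeasurePreserving.ae h
  exact Measure.ae_ae_of_ae_prod h1

lemma ae_exists_Ioo {P : ℝ → Prop} (h : ∀ᵐ t : ℝ, P t) {a b : ℝ} (hab : a < b) :
    ∃ t, a < t ∧ t < b ∧ P t := by
  have hf : ∃ᵐ t : ℝ, t ∈ Set.Ioo a b := by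
    rw [frequently_ae_mem_iff]; simp [hab]
  obtain ⟨t, ht, hP⟩ := (h.and_frequently hf).exists
  exact ⟨t, hP.1, hP.2, ht⟩

lemma eq_of_lev {f g : X m → ℝ} (h : lev f =ᵐ[(volume : Measure (Tc × Wm m))] lev g) :
    f =ᵐ[volume] g := by
  have h' : ∀ᵐ z : Tc × Wm m, (z ∈ lev f ↔ z ∈ lev g) := h.mem_iff
  filter_upwards [ae_swap h'] with x hx
  have hx' : ∀ᵐ t : ℝ, (t < f x ↔ t < g x) := hx
  rcases lt_trichotomy (f x) (g x) with hlt | heq | hlt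
  · obtain ⟨t, h1, h2, h3⟩ := ae_exists_Ioo hx' hlt
    exact absurd (h3.2 h2) (not_lt.2 h1.le)
  · exact heq
  · obtain ⟨t, h1, h2, h3⟩ := ae_exists_Ioo hx' hlt
    exact absurd (h3.1 h2) (not_lt.2 h1.le)

lemma tendsto_of_lev {f : ℕ → X m → ℝ} {g : X m → ℝ}
    (h : ∀ᵐ z : Tc × Wm m, ∀ᶠ k in Filter.atTop, (z ∈ lev (f k) ↔ z ∈ lev g)) :
    ∀ᵐ x, Filter.Tendsto (fun k => f k x) Filter.atTop (nhds (g x)) := by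
  filter_upwards [ae_swap h] with x hx
  have hx' : ∀ᵐ t : ℝ, ∀ᶠ k in Filter.atTop, (t < f k x ↔ t < g x) := hx
  refine tendsto_order.2 ⟨fun a ha => ?_, fun a ha => ?_⟩
  · obtain ⟨t, h1, h2, h3⟩ := ae_exists_Ioo hx' ha
    filter_upwards [h3] with k hk
    exact h1.trans (hk.2 h2)
  · obtain ⟨t, h1, h2, h3⟩ := ae_exists_Ioo hx' ha
    filter_upwards [h3] with k hk
    exact (not_lt.1 (fun h => absurd (hk.1 h) (not_lt.2 h1.le))).trans_lt h2

end Per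

end

section
open scoped ENNReal symmDiff

namespace Per
variable {m : ℕ}

structure Cl (q p : ℝ) (v w : X m → ℝ) : Prop where
  meas : Measurable w
  nn : ∀ x, 0 ≤ w x
  en : En q p w ≤ En q p v
  eqm : ∀ y, volume (fib (lev w) y) = volume (fib (lev v) y)

lemma bs_congr {v w : X m → ℝ} (h : ∀ y, volume (fib (lev w) y) = volume (fib (lev v) y)) :
    bs (lev w) = bs (lev v) := by
  unfold bs; ext z; simp [h]

lemma star_congr {v w : X m → ℝ} (h : ∀ y, volume (fib (lev w) y) = volume (fib (lev v) y)) :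
    star w = star v := by
  unfold star; rw [bs_congr h]

lemma pol_nonneg (c : Tc) {v : X m → ℝ} (h : ∀ x, 0 ≤ v x) (x : X m) : 0 ≤ pol c v x := by
  unfold pol
  split_ifs
  · exact le_max_of_le_left (h _)
  · exact le_min (h _) (h _)
  · exact h _

lemma eqm_pol (c : Tc) {v : X m → ℝ} (hv : Measurable v) (y : Wm m) :
    volume (fib (lev (pol c v)) y) = volume (fib (lev v) y) := by
  rw [lev_pol, vol_fib_pA c (measurableSet_lev hv)]

lemma Cl.pol {q p : ℝ} (hq : 1 < q) (hp : 1 < p) {v w : X m → ℝ} (h : Cl q p v w) (c : Tc) :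
    Cl q p v (pol c w) :=
  ⟨measurable_pol c h.meas, pol_nonneg c h.nn, (En_pol_le hq hp c h.meas).trans h.en,
    fun y => (eqm_pol c h.meas y).trans (h.eqm y)⟩

lemma exists_small {q p : ℝ} (hq : 1 < q) (hp : 1 < p) {v : X m → ℝ} (hv : Measurable v)
    (h0 : ∀ x, 0 ≤ v x) {e : ℝ≥0∞} (he : e ≠ 0) : ∃ w, Cl q p v w ∧ dl (nu m) (lev w) < e := by
  set D : Set ℝ≥0∞ := (fun w : X m → ℝ => dl (nu m) (lev w)) '' {w | Cl q p v w} with hD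
  have hvD : dl (nu m) (lev v) ∈ D := ⟨v, ⟨hv, h0, le_rfl, fun _ => rfl⟩, rfl⟩
  have hi : sInf D = 0 := by
    by_contra hne
    have hit : sInf D ≠ ⊤ := ne_top_of_le_ne_top (dl_ne_top (nu m) (lev v)) (sInf_le hvD)
    set i := sInf D
    have hi8 : i * i / 8 ≠ 0 := ENNReal.div_ne_zero.2 ⟨mul_ne_zero hne hne, by norm_num⟩
    have hlt : i < i + i * i / 8 := ENNReal.lt_add_right hit hi8
    obtain ⟨d, ⟨w, hw, rfl⟩, hd⟩ := sInf_lt_iff.1 hlt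
    obtain ⟨c, hc⟩ := exists_gain (nu m) (measurableSet_lev hw.meas)
    rw [← lev_pol] at hc
    have h1 : i ≤ dl (nu m) (lev (Per.pol c w)) := sInf_le ⟨_, hw.pol hq hp c, rfl⟩
    have h2 : i ≤ dl (nu m) (lev w) := sInf_le ⟨_, hw, rfl⟩
    have h3 : i + i * i / 8 ≤ dl (nu m) (lev w) :=
      (add_le_add h1 (ENNReal.div_le_div_right (mul_le_mul' h2 h2) 8)).trans hc
    exact absurd (h3.trans_lt hd) (lt_irrefl _)
  obtain ⟨d, ⟨w, hw, rfl⟩, hd⟩ := sInf_lt_iff.1 (hi.trans_lt (pos_iff_ne_zero.2 he))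
  exact ⟨w, hw, hd⟩

lemma En_star_le {q p : ℝ} (hq : 1 < q) (hp : 1 < p) {v : X m → ℝ} (hv : Measurable v)
    (h0 : ∀ x, 0 ≤ v x) : En q p (star v) ≤ En q p v := by
  have hex : ∀ k : ℕ, ∃ w, Cl q p v w ∧ dl (nu m) (lev w) < (2⁻¹ : ℝ≥0∞) ^ k := fun k =>
    exists_small hq hp hv h0 (pow_ne_zero _ (by norm_num))
  choose w hw hdl using hex
  have hsum : ∑' k, (lam m) (lev (w k) ∆ bs (lev v)) ≠ ⊤ := by
    have hb : ∀ k, (lam m) (lev (w k) ∆ bs (lev v)) ≤ 2 * (2⁻¹ : ℝ≥0∞) ^ k := by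
      intro k
      have := dl_symmDiff (nu m) (measurableSet_lev (hw k).meas)
      rw [bs_congr (hw k).eqm] at this
      unfold lam; rw [this]
      gcongr; exact (hdl k).le
    refine ne_top_of_le_ne_top ?_ (ENNReal.tsum_le_tsum hb)
    rw [ENNReal.tsum_mul_left, ENNReal.tsum_geometric]
    norm_num
  have hev := ae_eventually_notMem hsum
  rw [ae_lam] at hev
  have hconv : ∀ᵐ x, Filter.Tendsto (fun k => w k x) Filter.atTop (nhds (star v x)) := by
    apply tendsto_of_lev
    have hs : ∀ᵐ z : Tc × Wm m, (z ∈ lev (star v) ↔ z ∈ bs (lev v)) := (lev_star hv h0).mem_iff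
    filter_upwards [hev, hs] with z h1 h2
    filter_upwards [h1] with k hk
    rw [h2]
    rw [Set.mem_symmDiff] at hk
    tauto
  have hc1 : ∀ᵐ z : X m × X m, Filter.Tendsto (fun k => w k z.1) Filter.atTop (nhds (star v z.1)) :=
    Measure.quasiMeasurePreserving_fst.ae hconv
  have hc2 : ∀ᵐ z : X m × X m, Filter.Tendsto (fun k => w k z.2) Filter.atTop (nhds (star v z.2)) :=
    Measure.quasiMeasurePreserving_snd.ae hconv
  calc En q p (star v) ≤ ∫⁻ z, Filter.liminf (fun k => ed q p (w k) z) Filter.atTop := by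
        refine lintegral_mono_ae ?_
        filter_upwards [hc1, hc2] with z h1 h2
        unfold ed
        by_cases hJ : J p (star v z.1) (star v z.2) = 0
        · rw [hJ, zero_mul]; exact zero_le
        · have hT : Filter.Tendsto (fun k => J p (w k z.1) (w k z.2)) Filter.atTop
              (nhds (J p (star v z.1) (star v z.2))) := by
            unfold J
            refine ENNReal.tendsto_ofReal ?_
            exact ((h1.sub h2).abs).rpow_const (Or.inr (by linarith))
          exact (ENNReal.Tendsto.mul_const hT (Or.inl hJ)).liminf_eq.ge
    _ ≤ Filter.liminf (fun k => ∫⁻ z, ed q p (w k) z) Filter.atTop :=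
        lintegral_liminf_le (fun k => measurable_ed q p (hw k).meas)
    _ ≤ En q p v := by
        refine Filter.liminf_le_of_le (by isBoundedDefault) ?_
        intro b hb
        obtain ⟨k, hk⟩ := hb.exists
        exact hk.trans (hw k).en

lemma En_pol_of_star {q p : ℝ} (hq : 1 < q) (hp : 1 < p) {v : X m → ℝ} (hv : Measurable v)
    (h0 : ∀ x, 0 ≤ v x) (heq : En q p (star v) = En q p v) (c : Tc) :
    En q p (pol c v) = En q p v := by
  refine le_antisymm (En_pol_le hq hp c hv) ?_
  rw [← heq, ← star_congr (eqm_pol c hv)]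
  exact En_star_le hq hp (measurable_pol c hv) (pol_nonneg c h0)

/-- if every polarisation leaves the superlevel sets unchanged, the function is its rearrangement -/
lemma eq_star_of_pA {v : X m → ℝ} (hv : Measurable v) (h0 : ∀ x, 0 ≤ v x)
    (h : ∀ c, pA c (lev v) =ᵐ[lam m] lev v) : v =ᵐ[volume] star v := by
  have hm := measurableSet_lev hv
  obtain ⟨c, hc⟩ := exists_gain (nu m) hm
  have e : dl (nu m) (pA c (lev v)) = dl (nu m) (lev v) := by
    unfold dl
    rw [bs_pA c hm]
    exact measure_congr ((h c).diff (ae_eq_refl _))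
  rw [e] at hc
  have hz : dl (nu m) (lev v) * dl (nu m) (lev v) / 8 = 0 := by
    by_contra hne
    exact absurd ((ENNReal.lt_add_right (dl_ne_top (nu m) _) hne).trans_le hc) (lt_irrefl _)
  have hz' : dl (nu m) (lev v) = 0 := by
    rcases ENNReal.div_eq_zero_iff.1 hz with h | h
    · simpa using h
    · norm_num at h
  have hs := dl_symmDiff (nu m) hm
  rw [hz', mul_zero] at hs
  have h1 : lev v =ᵐ[lam m] bs (lev v) := measure_symmDiff_eq_zero_iff.1 hs
  have h1' : lev v =ᵐ[volume] bs (lev v) := by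
    unfold Filter.EventuallyEq at h1 ⊢
    rwa [ae_lam] at h1
  exact eq_of_lev (h1'.trans (lev_star hv h0).symm)

end Per

end

section
open scoped ENNReal symmDiff

namespace Per
variable {m : ℕ}

lemma ccos_eq_cos_norm (θ : Tc) : ccos θ = cos ‖θ‖ := by
  rw [norm_eq_abs_rep, cos_abs]; rfl

lemma continuous_ccos : Continuous ccos := by
  have : ccos = fun θ => cos ‖θ‖ := funext ccos_eq_cos_norm
  rw [this]; fun_prop

lemma ccos_neg (θ : Tc) : ccos (-θ) = ccos θ := by
  rw [ccos_eq_cos_norm, ccos_eq_cos_norm, norm_neg]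

lemma abs_ccos_le (θ : Tc) : |ccos θ| ≤ 1 := abs_cos_le_one _

noncomputable def ia (A : Set (Tc × Wm m)) (z : Tc × Wm m) : ℝ := A.indicator (fun _ => (1 : ℝ)) z

lemma ia_abs (A : Set (Tc × Wm m)) (z : Tc × Wm m) : |ia A z| ≤ 1 := by
  unfold ia Set.indicator; split_ifs <;> simp

lemma measurable_ia {A : Set (Tc × Wm m)} (hA : MeasurableSet A) : Measurable (ia A) :=
  measurable_const.indicator hA

instance : IsFiniteMeasure (lam m) := by unfold lam; infer_instance

lemma integrable_bdd {f : Tc × Wm m → ℝ} (hf : Measurable f) {C : ℝ} (h : ∀ z, |f z| ≤ C) :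
    Integrable f (lam m) :=
  Integrable.of_bound hf.aestronglyMeasurable C (Filter.Eventually.of_forall h)

lemma mp_integral {σ : Tc × Wm m → Tc × Wm m} (hσ : MeasurePreserving σ (lam m) (lam m))
    {g : Tc × Wm m → ℝ} (hg : Measurable g) : ∫ z, g (σ z) ∂(lam m) = ∫ z, g z ∂(lam m) := by
  conv_rhs => rw [← hσ.map_eq]
  rw [integral_map hσ.measurable.aemeasurable hg.aestronglyMeasurable]

noncomputable def Phi (A : Set (Tc × Wm m)) (b : Tc) : ℝ := ∫ z, ia A z * ccos (z.1 - b) ∂(lam m)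

lemma meas_pc {A : Set (Tc × Wm m)} (hA : MeasurableSet A) (b : Tc) :
    Measurable (fun z : Tc × Wm m => ia A z * ccos (z.1 - b)) :=
  (measurable_ia hA).mul (measurable_ccos.comp (measurable_fst.sub_const b))

lemma abs_pc (A : Set (Tc × Wm m)) (z : Tc × Wm m) (θ : Tc) : |ia A z * ccos θ| ≤ 1 := by
  rw [abs_mul]
  exact mul_le_one₀ (ia_abs _ _) (abs_nonneg _) (abs_ccos_le _)

lemma continuous_Phi {A : Set (Tc × Wm m)} (hA : MeasurableSet A) : Continuous (Phi A) := by
  refine continuous_of_dominated (bound := fun _ => 1)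
    (fun b => (meas_pc hA b).aestronglyMeasurable) ?_ (integrable_const _) ?_
  · exact fun b => Filter.Eventually.of_forall fun z => abs_pc A z _
  · exact Filter.Eventually.of_forall fun z =>
      continuous_const.mul (continuous_ccos.comp (continuous_const.sub continuous_id))

lemma mp_sg_lam (c : Tc) : MeasurePreserving (sg (W := Wm m) c) (lam m) (lam m) := mp_sg (nu m) c

noncomputable def rt (a : Tc) (z : Tc × Wm m) : Tc × Wm m := (z.1 + a, z.2)

lemma mp_rt (a : Tc) : MeasurePreserving (rt (m := m) a) (lam m) (lam m) :=
  (measurePreserving_add_right volume a).prod (MeasurePreserving.id (nu m))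

lemma ia_lev_rot (a : Tc) (v : X m → ℝ) (z : Tc × Wm m) :
    ia (lev (fun x => v (rot a x))) z = ia (lev v) (rt a z) := rfl

lemma Phi_rot (a : Tc) {v : X m → ℝ} (hv : Measurable v) (c : Tc) :
    ∫ z, ia (lev (fun x => v (rot a x))) z * ccos (z.1 - c) ∂(lam m) = Phi (lev v) (a + c) := by
  unfold Phi
  rw [← mp_integral (mp_rt a) (meas_pc (measurableSet_lev hv) _)]
  congr 1; funext z
  rw [ia_lev_rot]
  congr 2
  simp only [rt]; abel

lemma ae_pull {P : X m → Prop} (h : ∀ᵐ x, P x) : ∀ᵐ z ∂(lam m), P (z.1, z.2.1) := by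
  rw [ae_lam]
  have h1 : ∀ᵐ z : X m × ℝ, P z.1 := Measure.quasiMeasurePreserving_fst.ae h
  exact (volume_preserving_prodAssoc.symm).quasiMeasurePreserving.ae h1

lemma eqm_rot (a : Tc) {v : X m → ℝ} (hv : Measurable v) (y : Wm m) :
    volume (fib (lev (fun x => v (rot a x))) y) = volume (fib (lev v) y) := by
  have e : fib (lev (fun x => v (rot a x))) y = (fun θ => θ + a) ⁻¹' (fib (lev v) y) := rfl
  rw [e, (measurePreserving_add_right volume a).measure_preimage
    (measurableSet_fib (measurableSet_lev hv) y).nullMeasurableSet]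

lemma measurable_rotv (a : Tc) {v : X m → ℝ} (hv : Measurable v) :
    Measurable (fun x => v (rot a x)) := hv.comp (mp_rot a).measurable

theorem rigidity {q p : ℝ} (hq : 1 < q) (hp : 1 < p) {v : X m → ℝ} (hv : Measurable v)
    (h0 : ∀ x, 0 ≤ v x) (hfin : En q p v ≠ ⊤) (heq : En q p (star v) = En q p v) :
    ∃ a : Tc, (fun x => v (rot a x)) =ᵐ[volume] star v := by
  obtain ⟨a, -, ha⟩ := isCompact_univ.exists_isMaxOn (Set.univ_nonempty)
    (continuous_Phi (measurableSet_lev hv)).continuousOn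
  refine ⟨a, ?_⟩
  set w : X m → ℝ := fun x => v (rot a x) with hw
  have hwm : Measurable w := measurable_rotv a hv
  have hw0 : ∀ x, 0 ≤ w x := fun x => h0 _
  have hws : star w = star v := star_congr (eqm_rot a hv)
  have hwe : En q p w = En q p v := En_rot a hv
  rw [← hws]
  apply eq_star_of_pA hwm hw0
  intro c
  have hpe := En_pol_of_star hq hp hwm hw0 (by rw [hws, hwe, heq]) c
  have halt := En_pol_eq hq hp c hwm (by rw [hwe]; exact hfin) hpe
  set L := lev w with hL
  have hLm : MeasurableSet L := measurableSet_lev hwm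
  have hσ := mp_sg_lam (m := m) c
  -- reduction
  suffices hs : ∀ᵐ z ∂(lam m), ccos (c - z.1) < ccos z.1 → (sg c z ∈ L → z ∈ L) by
    have hs' : ∀ᵐ z ∂(lam m), ccos z.1 < ccos (c - z.1) → (z ∈ L → sg c z ∈ L) := by
      have := hσ.quasiMeasurePreserving.ae hs
      filter_upwards [this] with z hz
      rw [sg_sg] at hz
      simpa [sg] using hz
    rw [Filter.eventuallyEq_set]
    filter_upwards [hs, hs'] with z h1 h2
    rw [mem_pA]
    rcases tri (ccos z.1) (ccos (c - z.1)) with ⟨k1, k2⟩ | ⟨k1, k2⟩ | ⟨k1, k2⟩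
    · simp only [k1, k2, not_true_eq_false, not_false_eq_true, true_and, false_and, and_false, or_false,
        false_or]
      have := h2 k1
      tauto
    · simp [k1, k2]
    · simp only [k1, k2, not_true_eq_false, not_false_eq_true, true_and, false_and, and_false, or_false,
        false_or]
      have := h1 k2
      tauto
  rcases halt with h | h
  · filter_upwards [ae_pull h] with z hz hc hz1
    have := hz hc
    rw [hL, mem_lev] at hz1 ⊢
    exact lt_of_lt_of_le hz1 this
  · have hle : ∀ᵐ z ∂(lam m), ccos (c - z.1) < ccos z.1 → (z ∈ L → sg c z ∈ L) := by
      filter_upwards [ae_pull h] with z hz hc hz1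
      have := hz hc
      rw [hL, mem_lev] at hz1 ⊢
      exact lt_of_lt_of_le hz1 this
    have hle' : ∀ᵐ z ∂(lam m), ccos z.1 < ccos (c - z.1) → (sg c z ∈ L → z ∈ L) := by
      have := hσ.quasiMeasurePreserving.ae hle
      filter_upwards [this] with z hz
      rw [sg_sg] at hz
      simpa [sg] using hz
    set g : Tc × Wm m → ℝ := fun z => ia L z * ccos (z.1 - 0) - ia L z * ccos (z.1 - c) with hg
    have i1 := integrable_bdd (meas_pc hLm 0) (fun z => abs_pc L z _)
    have i2 := integrable_bdd (meas_pc hLm c) (fun z => abs_pc L z _)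
    have hgi : Integrable g (lam m) := i1.sub i2
    have hgm : Measurable g := (meas_pc hLm 0).sub (meas_pc hLm c)
    have hG : 0 ≤ ∫ z, g z ∂(lam m) := by
      rw [hg, integral_sub i1 i2, hL, hw, Phi_rot a hv, Phi_rot a hv, add_zero]
      have := ha (Set.mem_univ (a + c))
      simp only [Set.mem_setOf_eq] at this
      linarith
    have hgσ : Integrable (fun z => g (sg c z)) (lam m) :=
      hσ.integrable_comp_of_integrable hgi
    have hG2 : 0 ≤ ∫ z, (g z + g (sg c z)) ∂(lam m) := by
      rw [integral_add hgi hgσ, mp_integral hσ hgm]; linarith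
    have hform : ∀ z, g z + g (sg c z) = (ia L z - ia L (sg c z)) * (ccos z.1 - ccos (c - z.1)) := by
      intro z
      simp only [hg, sg]
      have e1 : ccos (z.1 - c) = ccos (c - z.1) := by rw [← ccos_neg]; congr 1; abel
      have e2 : ccos (c - z.1 - c) = ccos z.1 := by rw [← ccos_neg]; congr 1; abel
      rw [e1, e2, sub_zero, sub_zero]; ring
    have hval : ∀ z, (z ∈ L → ia L z = 1) ∧ (z ∉ L → ia L z = 0) := by
      intro z; unfold ia; constructor <;> intro hz <;> simp [hz]
    have hnp : ∀ᵐ z ∂(lam m), 0 ≤ -(g z + g (sg c z)) := by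
      filter_upwards [hle, hle'] with z h1 h2
      rw [hform]
      rcases lt_trichotomy (ccos z.1) (ccos (c - z.1)) with k | k | k
      · have := h2 k
        by_cases a1 : z ∈ L <;> by_cases a2 : sg c z ∈ L
        · rw [(hval _).1 a1, (hval _).1 a2]; simp
        · rw [(hval _).1 a1, (hval _).2 a2]; linarith
        · exact absurd (this a2) a1
        · rw [(hval _).2 a1, (hval _).2 a2]; simp
      · rw [k]; simp
      · have := h1 k
        by_cases a1 : z ∈ L <;> by_cases a2 : sg c z ∈ L
        · rw [(hval _).1 a1, (hval _).1 a2]; simp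
        · exact absurd (this a1) a2
        · rw [(hval _).2 a1, (hval _).1 a2]; linarith
        · rw [(hval _).2 a1, (hval _).2 a2]; simp
    have hint0 : ∫ z, -(g z + g (sg c z)) ∂(lam m) = 0 := by
      refine le_antisymm ?_ (integral_nonneg_of_ae hnp)
      rw [integral_neg]; linarith
    have hz0 := (integral_eq_zero_iff_of_nonneg_ae hnp (hgi.add hgσ).neg).1 hint0
    filter_upwards [hz0] with z hz k hz1
    by_contra a1
    have : -(g z + g (sg c z)) = 0 := hz
    rw [hform, (hval _).2 a1, (hval _).1 hz1] at this
    linarith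

end Per

end

namespace Per
variable {m : ℕ}

lemma unfold_line {g : ℝ → ℝ≥0∞} (hg : Measurable g) :
    ∫⁻ y, g y = ∫⁻ y in Set.Ioc (-π) π, ∑' k : ℤ, g (y - 2 * π * k) := by
  rw [lintegral_tsum (f := fun (k : ℤ) (y : ℝ) => g (y - 2 * π * k))
    (fun k => (hg.comp (by fun_prop)).aemeasurable)]
  have h1 : ∫⁻ y, g y = ∑' k : ℤ,
      ∫⁻ y in Set.Ioc (-π + k • (2 * π)) (-π + (k + 1) • (2 * π)), g y := by
    rw [← lintegral_iUnion (fun k => measurableSet_Ioc) (Set.pairwise_disjoint_Ioc_add_zsmul _ _),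
      iUnion_Ioc_add_zsmul Real.two_pi_pos, setLIntegral_univ]
  rw [h1, ← (Equiv.neg ℤ).tsum_eq (fun k : ℤ => ∫⁻ y in Set.Ioc (-π) π, g (y - 2 * π * k))]
  refine tsum_congr fun k => ?_
  have := (measurePreserving_add_right (volume : Measure ℝ) (2 * π * k)).setLIntegral_comp_preimage
    (s := Set.Ioc (-π + k • (2 * π)) (-π + (k + 1) • (2 * π))) measurableSet_Ioc hg
  rw [← this]
  have e : (fun x : ℝ => x + 2 * π * k) ⁻¹' Set.Ioc (-π + k • (2 * π)) (-π + (k + 1) • (2 * π))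
      = Set.Ioc (-π) π := by
    ext x
    simp only [Set.mem_preimage, Set.mem_Ioc, zsmul_eq_mul]
    push_cast
    constructor <;> rintro ⟨h, h'⟩ <;> constructor <;> linarith
  rw [e]
  simp only [Equiv.neg_apply]
  push_cast
  simp only [mul_neg, sub_neg_eq_add]

lemma circ_lintegral (f : Tc → ℝ≥0∞) : ∫⁻ y in Set.Ioc (-π) π, f (y : Tc) = ∫⁻ θ, f θ := by
  have := AddCircle.lintegral_preimage (2 * π) (-π) f
  rwa [show -π + 2 * π = π by ring] at this

/-- the projection -/
noncomputable def pj (x : ℝ × Ev m) : X m := ((x.1 : Tc), x.2)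

lemma measurable_pj : Measurable (pj (m := m)) :=
  (AddCircle.measurable_mk'.comp measurable_fst).prodMk measurable_snd

lemma kern_pt {q p : ℝ} (hp : 1 < p) (u : ℝ × Ev m → ℝ) (x y : ℝ × Ev m) :
    ENNReal.ofReal (|u x - u y| ^ p / Real.sqrt ((x.1 - y.1) ^ 2 + ‖x.2 - y.2‖ ^ 2) ^ q)
    = J p (u x) (u y) * ENNReal.ofReal ((x.1 - y.1) ^ 2 + ‖x.2 - y.2‖ ^ 2) ^ (-(q / 2)) := by
  have h0 : 0 ≤ (x.1 - y.1) ^ 2 + ‖x.2 - y.2‖ ^ 2 := by positivity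
  rcases h0.eq_or_lt with h | h
  · have h1 : x.1 - y.1 = 0 := by nlinarith [sq_nonneg (x.1 - y.1), sq_nonneg ‖x.2 - y.2‖]
    have h2 : ‖x.2 - y.2‖ = 0 := by nlinarith [sq_nonneg (x.1 - y.1), sq_nonneg ‖x.2 - y.2‖]
    have : x = y := Prod.ext (sub_eq_zero.1 h1) (sub_eq_zero.1 (norm_eq_zero.1 h2))
    subst this
    have : (0:ℝ) ^ p = 0 := zero_rpow (by linarith)
    simp [J, this]
  · rw [J, ENNReal.ofReal_rpow_of_pos h, ← ENNReal.ofReal_mul (by positivity), div_eq_mul_inv,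
      Real.sqrt_eq_rpow, ← rpow_mul h.le, ← rpow_neg h.le]
    congr 3; ring

lemma pj_shift (y1 : ℝ) (y2 : Ev m) (k : ℤ) : pj (y1 - 2 * π * k, y2) = ((y1 : Tc), y2) := by
  simp only [pj]
  congr 1
  have : ((2 * π * k : ℝ) : Tc) = 0 := by
    rw [show 2 * π * k = k • (2 * π) by simp [mul_comm], AddCircle.coe_zsmul,
      AddCircle.coe_period, smul_zero]
  rw [AddCircle.coe_sub, this, sub_zero]

lemma inner_eq {q p : ℝ} (hp : 1 < p) {U : X m → ℝ} (hU : Measurable U) (x : ℝ × Ev m) :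
    ∫⁻ y : ℝ × Ev m, ENNReal.ofReal (|U (pj x) - U (pj y)| ^ p /
        Real.sqrt ((x.1 - y.1) ^ 2 + ‖x.2 - y.2‖ ^ 2) ^ q) =
      ∫⁻ y : X m, ed q p U (pj x, y) := by
  have hm : Measurable (fun y : ℝ × Ev m => ENNReal.ofReal (|U (pj x) - U (pj y)| ^ p /
        Real.sqrt ((x.1 - y.1) ^ 2 + ‖x.2 - y.2‖ ^ 2) ^ q)) := by
    have hc := hU.comp (measurable_pj (m := m))
    have h1 : Measurable (fun y : ℝ × Ev m => |U (pj x) - U (pj y)| ^ p) :=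
      ((measurable_const.sub hc).abs).pow_const p
    exact (h1.div (by fun_prop)).ennreal_ofReal
  have hed : Measurable (fun y : X m => ed q p U (pj x, y)) :=
    (measurable_ed q p hU).comp measurable_prodMk_left
  rw [Measure.volume_eq_prod, lintegral_prod_symm _ hm.aemeasurable]
  rw [Measure.volume_eq_prod, lintegral_prod_symm _ hed.aemeasurable]
  refine lintegral_congr fun y2 => ?_
  have hm2 := hm.comp (measurable_prodMk_right (y := y2))
  refine (unfold_line hm2).trans ?_
  rw [← circ_lintegral]
  refine lintegral_congr fun y1 => ?_
  simp only [ed, Function.comp_apply]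
  have hk := fun y => kern_pt (q := q) hp (fun z => U (pj z)) x y
  simp only [hk]
  simp only [pj_shift]
  rw [ENNReal.tsum_mul_left]
  congr 1
  simp only [pj]
  rw [← AddCircle.coe_sub, K_coe, KR]
  refine tsum_congr fun k => ?_
  congr 3; ring

lemma strip_lintegral {G : X m → ℝ≥0∞} (hG : Measurable G) :
    ∫⁻ x in {x : ℝ × Ev m | x.1 ∈ Set.Ioo (-π) π}, G (pj x) = ∫⁻ x, G x := by
  have hs : {x : ℝ × Ev m | x.1 ∈ Set.Ioo (-π) π} = Set.Ioo (-π) π ×ˢ Set.univ := by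
    ext x; simp
  rw [hs, Measure.volume_eq_prod, ← Measure.prod_restrict, Measure.restrict_univ,
    lintegral_prod_symm (fun x => G (pj x)) (hG.comp measurable_pj).aemeasurable, Measure.volume_eq_prod,
    lintegral_prod_symm _ hG.aemeasurable]
  refine lintegral_congr fun y2 => ?_
  rw [setLIntegral_congr Ioo_ae_eq_Ioc]
  exact circ_lintegral fun θ => G (θ, y2)

lemma gagP_eq {s p : ℝ} (hp : 1 < p) {U : X m → ℝ} (hU : Measurable U) :
    gagP m s p (fun x => U (pj x)) = En ((m : ℝ) + 1 + s * p) p U := by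
  unfold gagP
  simp only [inner_eq hp hU]
  rw [strip_lintegral (G := fun x => ∫⁻ y : X m, ed ((m : ℝ) + 1 + s * p) p U (x, y))
    (measurable_ed _ p hU).lintegral_prod_right', En]
  exact (lintegral_prod _ (measurable_ed _ p hU).aemeasurable).symm

lemma ae_pj {P : X m → Prop} (h : ∀ᵐ x, P x) : ∀ᵐ x : ℝ × Ev m, P (pj x) := by
  have : Measure.QuasiMeasurePreserving (pj (m := m)) volume volume := by
    refine ⟨measurable_pj, Measure.AbsolutelyContinuous.mk fun N hN h0 => ?_⟩
    have hi : Measurable (N.indicator (fun _ => (1:ℝ≥0∞))) := measurable_const.indicator hN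
    have h1 : ∫⁻ x : ℝ × Ev m, N.indicator (fun _ => (1:ℝ≥0∞)) (pj x) =
        ∫⁻ x : X m, ∑' _ : ℤ, N.indicator (fun _ => (1:ℝ≥0∞)) x := by
      rw [Measure.volume_eq_prod, lintegral_prod_symm (fun x => N.indicator (fun _ => (1:ℝ≥0∞)) (pj x))
        (hi.comp measurable_pj).aemeasurable,
        Measure.volume_eq_prod,
        lintegral_prod_symm _ (Measurable.tsum fun _ => hi).aemeasurable]
      refine lintegral_congr fun y2 => ?_
      have hm2 := (hi.comp measurable_pj).comp (measurable_prodMk_right (y := y2))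
      refine (unfold_line hm2).trans ?_
      rw [← circ_lintegral]
      refine lintegral_congr fun y1 => ?_
      refine tsum_congr fun k => ?_
      simp only [Function.comp_apply, pj_shift]
    rw [lintegral_tsum (fun _ => hi.aemeasurable)] at h1
    rw [Measure.map_apply measurable_pj hN, ← lintegral_indicator_one (measurable_pj hN)]
    refine Eq.trans ?_ (h1.trans ?_)
    · rfl
    · simp [lintegral_indicator hN, h0]
  exact this.ae h

lemma ae_of_pj {P : X m → Prop} (hP : MeasurableSet {x | P x})
    (h : ∀ᵐ x : ℝ × Ev m, P (pj x)) : ∀ᵐ x, P x := by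
  have h1 := lintegral_eq_zero_iff (μ := (volume : Measure (X m)))
    ((measurable_const (a := (1:ℝ≥0∞))).indicator hP.compl)
  have h2 : ∫⁻ x : X m, ({x | P x}ᶜ).indicator (fun _ => (1:ℝ≥0∞)) x = 0 := by
    rw [← strip_lintegral ((measurable_const (a := (1:ℝ≥0∞))).indicator hP.compl)]
    rw [lintegral_congr_ae (g := fun _ => 0)]
    · simp
    · filter_upwards [ae_restrict_of_ae h] with x hx
      simp [hx]
  filter_upwards [h1.1 h2] with x hx
  by_contra hc
  simp [hc] at hx

lemma red_mem (x : ℝ) : x - 2 * π * (⌊(x + π) / (2 * π)⌋ : ℝ) ∈ Set.Ico (-π) π := by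
  have hpi := Real.two_pi_pos
  have h1 := Int.floor_le ((x + π) / (2 * π))
  have h2 := Int.lt_floor_add_one ((x + π) / (2 * π))
  rw [le_div_iff₀ hpi] at h1
  rw [div_lt_iff₀ hpi] at h2
  constructor <;> nlinarith

lemma norm_coe_of_mem {y : ℝ} (h : y ∈ Set.Ico (-π) π) : ‖(y : Tc)‖ = |y| := by
  have hpi := pi_pos
  rw [AddCircle.norm_coe_eq_abs_iff _ (by positivity)]
  rw [abs_of_pos (by positivity : (0:ℝ) < 2 * π), abs_le]
  constructor <;> linarith [h.1, h.2]

lemma vol_fib (v : X m → ℝ) (x2 : Ev m) (hv : Measurable v) (t : ℝ) :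
    volume {y : ℝ | y ∈ Set.Ioo (-π) π ∧ t < v (pj (y, x2))} = volume (fib (lev v) (x2, t)) := by
  have hN : MeasurableSet (fib (lev v) (x2, t)) :=
    measurable_prodMk_right (measurableSet_lev hv)
  have h1 := circ_lintegral ((fib (lev v) (x2, t)).indicator 1)
  rw [lintegral_indicator_one hN] at h1
  rw [← h1, ← setLIntegral_congr Ioo_ae_eq_Ioc]
  have hM : MeasurableSet ((fun y : ℝ => (y : Tc)) ⁻¹' (fib (lev v) (x2, t))) :=
    AddCircle.measurable_mk' hN
  have h2 : ∫⁻ y in Set.Ioo (-π) π, (fib (lev v) (x2, t)).indicator 1 (y : Tc) =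
    ∫⁻ y in Set.Ioo (-π) π,
      ((fun y : ℝ => (y : Tc)) ⁻¹' (fib (lev v) (x2, t))).indicator 1 y := rfl
  rw [h2, lintegral_indicator_one hM, Measure.restrict_apply hM]
  congr 1
  ext y
  exact and_comm

lemma perRearr1_eq {U : X m → ℝ} (hU : Measurable U) (x : ℝ × Ev m) :
    perRearr1 m (fun x => U (pj x)) x = star (fun z => |U z|) (pj x) := by
  simp only [perRearr1, perRearr, periodize, symmRearr, star]
  congr 1
  ext t
  have hr := red_mem x.1
  set y := x.1 - 2 * π * (⌊(x.1 + π) / (2 * π)⌋ : ℝ) with hy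
  have hyx : pj (y, x.2) = pj x := pj_shift x.1 x.2 _
  have hyx1 : (pj x).1 = (y : Tc) := by rw [← hyx]; rfl
  have hm : Measurable fun z => |U z| := hU.abs
  have hiff : y ∈ symmSet {y | y ∈ Set.Ioo (-π) π ∧ t < |U (pj (y, x.2))|} ↔
      ((pj x).1, ((pj x).2, t)) ∈ bs (lev fun z => |U z|) := by
    rw [mem_bs_lev, hyx1, norm_coe_of_mem hr, symmSet, vol_fib (fun z => |U z|) x.2 hm t, abs_lt]
    rfl
  by_cases h : y ∈ symmSet {y | y ∈ Set.Ioo (-π) π ∧ t < |U (pj (y, x.2))|}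
  · rw [Set.indicator_of_mem h, Set.indicator_of_mem (hiff.1 h)]
  · rw [Set.indicator_of_notMem h, Set.indicator_of_notMem (fun h' => h (hiff.2 h'))]

theorem main {s p : ℝ} (hs0 : 0 < s) (hp : 1 < p) {U : X m → ℝ} (hU : Measurable U)
    (hfin : gagP m s p (fun x => U (pj x)) ≠ ⊤) :
    gagP m s p (perRearr1 m (fun x => U (pj x))) = gagP m s p (fun x => U (pj x)) ↔
      ∃ ε : ℝ, (ε = 1 ∨ ε = -1) ∧
        (∀ᵐ x ∂(volume : Measure (ℝ × Ev m)), U (pj x) = ε * |U (pj x)|) ∧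
        ∃ a : ℝ, ∀ᵐ x ∂(volume : Measure (ℝ × Ev m)),
          U (pj x) = ε * perRearr1 m (fun x => U (pj x)) (x.1 + a, x.2) := by
  have hq : 1 < (m : ℝ) + 1 + s * p := by
    have : 0 < s * p := by positivity
    have : (0:ℝ) ≤ m := Nat.cast_nonneg m
    linarith
  have hA : Measurable fun z => |U z| := hU.abs
  have hS := measurable_star hA
  have e1 : perRearr1 m (fun x => U (pj x)) = fun x => star (fun z => |U z|) (pj x) :=
    funext (perRearr1_eq hU)
  have hpa : ∀ (x : ℝ × Ev m) (a : ℝ), pj (x.1 + a, x.2) = rot (a : Tc) (pj x) := by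
    intro x a; rfl
  rw [e1, gagP_eq hp hS, gagP_eq hp hU]
  rw [gagP_eq hp hU] at hfin
  simp only [hpa]
  set q := (m : ℝ) + 1 + s * p
  set S := star (fun z => |U z|) with hSdef
  constructor
  · intro heq
    have l1 : En q p S ≤ En q p (fun z => |U z|) := En_star_le hq hp hA (fun x => abs_nonneg _)
    have l2 : En q p (fun z => |U z|) ≤ En q p U := En_abs_le hp U
    have e2 : En q p (fun z => |U z|) = En q p U := le_antisymm l2 (heq ▸ l1)
    have e3 : En q p S = En q p (fun z => |U z|) := heq.trans e2.symm
    obtain ⟨a, ha⟩ := rigidity hq hp hA (fun x => abs_nonneg _) (e2 ▸ hfin) e3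
    have ha2 : ∀ᵐ z : X m, |U z| = S (rot (-a) z) := by
      filter_upwards [(mp_rot (m := m) (-a)).quasiMeasurePreserving.ae ha] with z hz
      rw [hSdef, ← hz]
      simp [rot]
    have ha3 : ∃ b : ℝ, ∀ᵐ z : X m, |U z| = S (rot (b : Tc) z) :=
      ⟨rep (-a), by simpa only [coe_rep] using ha2⟩
    obtain ⟨b, hb⟩ := ha3
    have hsg := En_abs_eq hq hp hU hfin e2
    rcases hsg with hsg | hsg
    · refine ⟨1, Or.inl rfl, ?_, b, ?_⟩
      · filter_upwards [ae_pj hsg] with x hx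
        rw [abs_of_nonneg hx, one_mul]
      · filter_upwards [ae_pj hsg, ae_pj hb] with x hx hx2
        rw [← hx2, abs_of_nonneg hx, one_mul]
    · refine ⟨-1, Or.inr rfl, ?_, b, ?_⟩
      · filter_upwards [ae_pj hsg] with x hx
        rw [abs_of_nonpos hx]; ring
      · filter_upwards [ae_pj hsg, ae_pj hb] with x hx hx2
        rw [← hx2, abs_of_nonpos hx]; ring
  · rintro ⟨ε, hε, -, a, ha⟩
    have hR : Measurable fun z : X m => S (rot (a : Tc) z) := measurable_rotv _ hS
    have h1 : ∀ᵐ z : X m, U z = ε * S (rot (a : Tc) z) :=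
      ae_of_pj (P := fun z => U z = ε * S (rot (a : Tc) z))
        (measurableSet_eq_fun hU (hR.const_mul ε)) ha
    rw [En_congr h1]
    rcases hε with rfl | rfl
    · simp only [one_mul]
      exact (En_rot _ hS).symm
    · simp only [neg_mul, one_mul]
      rw [En_neg]
      exact (En_rot _ hS).symm

end Per

theorem stmt_7 (m : ℕ) (s p : ℝ) (hs0 : 0 < s) (hs1 : s < 1) (hp : 1 < p)
    (u : ℝ × EuclideanSpace ℝ (Fin m) → ℝ) (hu : Measurable u)
    (huper : ∀ x : ℝ × EuclideanSpace ℝ (Fin m), u (x.1 + 2 * π, x.2) = u x)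
    (hfin : gagP m s p u ≠ ⊤) :
    gagSeminorm m s p (perRearr1 m u) = gagSeminorm m s p u ↔
      ∃ ε : ℝ, (ε = 1 ∨ ε = -1) ∧
        (∀ᵐ x ∂(volume : Measure (ℝ × EuclideanSpace ℝ (Fin m))), u x = ε * |u x|) ∧
        ∃ a : ℝ, ∀ᵐ x ∂(volume : Measure (ℝ × EuclideanSpace ℝ (Fin m))),
          u x = ε * perRearr1 m u (x.1 + a, x.2) := by
  have hU : Measurable (fun z : Per.X m => u (Per.rep z.1, z.2)) :=
    hu.comp ((Per.measurable_rep.comp measurable_fst).prodMk measurable_snd)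
  have hu2 : u = fun x => (fun z : Per.X m => u (Per.rep z.1, z.2)) (Per.pj x) := by
    funext x
    have hper : Function.Periodic (fun t => u (t, x.2)) (2 * π) := fun t => huper (t, x.2)
    exact (Per.rep_coe hper x.1).symm
  have hp0 : 0 < 1 / p := by positivity
  unfold gagSeminorm
  rw [(ENNReal.rpow_left_injective hp0.ne').eq_iff]
  generalize (fun z : Per.X m => u (Per.rep z.1, z.2)) = U at hU hu2
  subst hu2
  exact Per.main hs0 hp hU hfin
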